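/- Let k ≥ 3 be an integer with k ∉ {4,5}. For all sufficiently large n, if G is an n-vertex W_{2k+1}-free simple graph attaining the maximum spectral radius among all n-vertex W_{2k+1}-free graphs, V(G) = L ⊔ R is a maximum cut of G, and L contains a vertex of internal degree k − 1, then the induced subgraph G[L] is (k−1)-regular if (k−1)·|L| is even, and nearly (k−1)-regular (every vertex of degree k−1 except one vertex of degree k−2) if (k−1)·|L| is odd; moreover the induced subgraph G[R] contains exactly one edge. -/

import Mathlib

/-- The wheel graph on `t` vertices: vertex `0` joined to every vertex of the
cycle `1, 2, …, t-1` (with `t-1` adjacent to `1`). -/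
def wheelGraph (t : ℕ) : SimpleGraph (Fin t) where
  Adj a b := a ≠ b ∧ (a.val = 0 ∨ b.val = 0 ∨ a.val + 1 = b.val ∨ b.val + 1 = a.val ∨
      (a.val = 1 ∧ b.val = t - 1) ∨ (b.val = 1 ∧ a.val = t - 1))
  symm := by
    constructor
    intro a b h
    exact ⟨h.1.symm, by tauto⟩
  loopless := by
    constructor
    intro a h
    exact h.1 rfl

/-- `G` contains a copy of `F`, i.e. a subgraph isomorphic to `F`. -/
def ContainsCopy {α β : Type*} (F : SimpleGraph α) (G : SimpleGraph β) : Prop :=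
  ∃ f : α ↪ β, ∀ a b, F.Adj a b → G.Adj (f a) (f b)

/-- `G` is `W_t`-free: it contains no subgraph isomorphic to the wheel on `t` vertices. -/
def WheelFree (t : ℕ) {n : ℕ} (G : SimpleGraph (Fin n)) : Prop :=
  ¬ ContainsCopy (wheelGraph t) G

/-- The spectral radius of `G`: the largest eigenvalue of its adjacency matrix. -/
noncomputable def lam1 {n : ℕ} (G : SimpleGraph (Fin n)) : ℝ := by
  classical
  exact sSup {μ : ℝ | Module.End.HasEigenvalue (Matrix.toLin' (G.adjMatrix ℝ)) μ}

/-- The number of edges of a graph on a finite vertex type. -/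
noncomputable def edgeCount {V : Type*} [Fintype V] (G : SimpleGraph V) : ℕ := by
  classical
  exact G.edgeFinset.card

/-- The degree of a vertex. -/
noncomputable def deg {n : ℕ} (G : SimpleGraph (Fin n)) (v : Fin n) : ℕ := by
  classical
  exact G.degree v

/-- The number of neighbours of `v` inside the set `A`. -/
noncomputable def degIn {n : ℕ} (G : SimpleGraph (Fin n)) (A : Finset (Fin n)) (v : Fin n) : ℕ := by
  classical
  exact (A.filter fun u => G.Adj v u).card

/-- The number of edges of `G` with one endpoint in `S` and the other outside `S`. -/
noncomputable def cutCount {n : ℕ} (G : SimpleGraph (Fin n)) (S : Finset (Fin n)) : ℕ := by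
  classical
  exact ((Finset.univ : Finset (Fin n × Fin n)).filter
    fun p => G.Adj p.1 p.2 ∧ p.1 ∈ S ∧ p.2 ∉ S).card

/-- `(S, T)` is a maximum cut of `G`. -/
def IsMaxCut {n : ℕ} (G : SimpleGraph (Fin n)) (S T : Finset (Fin n)) : Prop :=
  T = Sᶜ ∧ ∀ S' : Finset (Fin n), cutCount G S' ≤ cutCount G S

/-- `G` attains the maximum spectral radius among all `n`-vertex `W_t`-free graphs. -/
def IsSpexWheel (t : ℕ) {n : ℕ} (G : SimpleGraph (Fin n)) : Prop :=
  WheelFree t G ∧ ∀ H : SimpleGraph (Fin n), WheelFree t H → lam1 H ≤ lam1 G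

/-- `G` attains the maximum number of edges among all `n`-vertex `W_t`-free graphs. -/
def IsExWheel (t : ℕ) {n : ℕ} (G : SimpleGraph (Fin n)) : Prop :=
  WheelFree t G ∧ ∀ H : SimpleGraph (Fin n), WheelFree t H → edgeCount H ≤ edgeCount G

section Helpers

open Finset

noncomputable def aa {n : ℕ} (G : SimpleGraph (Fin n)) (u v : Fin n) : ℝ := by
  classical
  exact if G.Adj u v then 1 else 0

lemma aa_of_adj {n : ℕ} {G : SimpleGraph (Fin n)} {u v : Fin n} (h : G.Adj u v) : aa G u v = 1 := by
  simp [aa, h]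

lemma aa_of_not {n : ℕ} {G : SimpleGraph (Fin n)} {u v : Fin n} (h : ¬ G.Adj u v) :
    aa G u v = 0 := by
  simp [aa, h]

lemma aa_symm {n : ℕ} (G : SimpleGraph (Fin n)) (u v : Fin n) : aa G u v = aa G v u := by
  by_cases h : G.Adj u v
  · rw [aa_of_adj h, aa_of_adj h.symm]
  · rw [aa_of_not h, aa_of_not (fun h' => h h'.symm)]

lemma aa_self {n : ℕ} (G : SimpleGraph (Fin n)) (u : Fin n) : aa G u u = 0 := by
  simp [aa]

lemma aa_nonneg {n : ℕ} (G : SimpleGraph (Fin n)) (u v : Fin n) : 0 ≤ aa G u v := by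
  unfold aa; split_ifs <;> norm_num

lemma aa_le_one {n : ℕ} (G : SimpleGraph (Fin n)) (u v : Fin n) : aa G u v ≤ 1 := by
  unfold aa; split_ifs <;> norm_num

lemma sum_aa {n : ℕ} (G : SimpleGraph (Fin n)) (A : Finset (Fin n)) (v : Fin n) :
    ∑ u ∈ A, aa G v u = (degIn G A v : ℝ) := by
  simp [aa, degIn]

noncomputable def mulA {n : ℕ} (G : SimpleGraph (Fin n)) (x : Fin n → ℝ) (v : Fin n) : ℝ :=
  ∑ u, aa G v u * x u

noncomputable def qA {n : ℕ} (G : SimpleGraph (Fin n)) (x : Fin n → ℝ) : ℝ :=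
  ∑ v, x v * mulA G x v

lemma mulA_symm {n : ℕ} (G : SimpleGraph (Fin n)) (x y : Fin n → ℝ) :
    ∑ v, x v * mulA G y v = ∑ v, y v * mulA G x v := by
  simp only [mulA, mul_sum]
  rw [sum_comm]
  refine sum_congr rfl fun v _ => sum_congr rfl fun u _ => ?_
  rw [aa_symm]; ring

lemma mulA_add {n : ℕ} (G : SimpleGraph (Fin n)) (x y : Fin n → ℝ) (t : ℝ) (v : Fin n) :
    mulA G (fun u => x u + t * y u) v = mulA G x v + t * mulA G y v := by
  simp only [mulA, mul_sum, ← sum_add_distrib]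
  refine sum_congr rfl fun u _ => ?_
  ring

lemma qA_add {n : ℕ} (G : SimpleGraph (Fin n)) (x y : Fin n → ℝ) (t : ℝ) :
    qA G (fun u => x u + t * y u) = qA G x + 2 * t * ∑ v, y v * mulA G x v + t ^ 2 * qA G y := by
  have h := mulA_symm G x y
  simp only [qA, mulA_add]
  have : ∀ v, (x v + t * y v) * (mulA G x v + t * mulA G y v)
    = x v * mulA G x v + t * (x v * mulA G y v) + t * (y v * mulA G x v)
      + t ^ 2 * (y v * mulA G y v) := fun v => by ring
  simp only [this, sum_add_distrib, ← mul_sum, h]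
  ring

lemma eig_of_max {n : ℕ} (G : SimpleGraph (Fin n)) (μ : ℝ) (x : Fin n → ℝ)
    (hmax : ∀ y, qA G y ≤ μ * ∑ v, y v ^ 2) (hx : qA G x = μ * ∑ v, x v ^ 2) (v : Fin n) :
    mulA G x v = μ * x v := by
  have key : ∀ t : ℝ, 2 * t * (mulA G x v - μ * x v) ≤ μ * t ^ 2 := by
    intro t
    have h := hmax (fun u => x u + t * (Pi.single v (1 : ℝ) : Fin n → ℝ) u)
    rw [qA_add] at h
    have h1 : ∑ w, (Pi.single v (1 : ℝ) : Fin n → ℝ) w * mulA G x w = mulA G x v := by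
      simp [Pi.single_apply]
    have h2 : qA G (Pi.single v (1 : ℝ) : Fin n → ℝ) = 0 := by
      simp [qA, mulA, Pi.single_apply, aa_self]
    have h3 : ∑ w, (x w + t * (Pi.single v (1 : ℝ) : Fin n → ℝ) w) ^ 2
        = ∑ w, x w ^ 2 + 2 * t * x v + t ^ 2 := by
      have : ∀ w, (x w + t * (Pi.single v (1 : ℝ) : Fin n → ℝ) w) ^ 2
        = x w ^ 2 + (if w = v then 2 * t * x w + t ^ 2 else 0) := by
        intro w
        by_cases hw : w = v
        · subst hw; simp; ring
        · simp [hw]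
      simp only [this, sum_add_distrib]
      simp; ring
    rw [h1, h2, h3, hx] at h
    nlinarith
  by_contra hne
  set d := mulA G x v - μ * x v with hd
  have hd0 : d ≠ 0 := fun h => hne (by linarith)
  have hpos : 0 < d ^ 2 := by positivity
  have hm : 0 < |μ| + 1 := by positivity
  have := key (d / (|μ| + 1))
  have e1 : 2 * (d / (|μ| + 1)) * d = 2 * d ^ 2 / (|μ| + 1) := by ring
  have e2 : μ * (d / (|μ| + 1)) ^ 2 = (μ / (|μ| + 1)) * (d ^ 2 / (|μ| + 1)) := by
    field_simp
  rw [e1, e2] at this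
  have h3 : μ / (|μ| + 1) ≤ 1 := by
    rw [div_le_one hm]; linarith [le_abs_self μ]
  have h4 : 0 < d ^ 2 / (|μ| + 1) := by positivity
  have h5 : 2 * d ^ 2 / (|μ| + 1) = 2 * (d ^ 2 / (|μ| + 1)) := by ring
  nlinarith

lemma qA_abs {n : ℕ} (G : SimpleGraph (Fin n)) (x : Fin n → ℝ) :
    qA G x ≤ qA G (fun v => |x v|) := by
  unfold qA mulA
  refine sum_le_sum fun v _ => ?_
  rw [mul_sum, mul_sum]
  refine sum_le_sum fun u _ => ?_
  have h1 := aa_nonneg G v u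
  have h2 : x v * x u ≤ |x v| * |x u| := by rw [← abs_mul]; exact le_abs_self _
  calc x v * (aa G v u * x u) = aa G v u * (x v * x u) := by ring
    _ ≤ aa G v u * (|x v| * |x u|) := by gcongr
    _ = _ := by ring

lemma qA_smul {n : ℕ} (G : SimpleGraph (Fin n)) (x : Fin n → ℝ) (t : ℝ) :
    qA G (fun v => t * x v) = t ^ 2 * qA G x := by
  unfold qA mulA
  simp only [mul_sum]
  refine sum_congr rfl fun v _ => sum_congr rfl fun u _ => ?_
  ring

lemma exists_max {n : ℕ} (hn : 0 < n) (G : SimpleGraph (Fin n)) :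
    ∃ (μ : ℝ) (x : Fin n → ℝ), (∀ v, 0 ≤ x v) ∧ (∑ v, x v ^ 2 = 1) ∧ qA G x = μ ∧
      ∀ y, qA G y ≤ μ * ∑ v, y v ^ 2 := by
  set S : Set (Fin n → ℝ) := {x | ∑ v, x v ^ 2 = 1} with hS
  have hclosed : IsClosed S := isClosed_eq (by fun_prop) continuous_const
  have hsub : S ⊆ Metric.closedBall 0 1 := by
    intro x hx
    rw [mem_closedBall_zero_iff, pi_norm_le_iff_of_nonneg zero_le_one]
    intro i
    rw [Real.norm_eq_abs, ← sq_le_one_iff_abs_le_one]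
    rw [← (show ∑ v, x v ^ 2 = 1 from hx)]
    exact single_le_sum (f := fun v => x v ^ 2) (fun v _ => sq_nonneg _) (mem_univ i)
  have hcomp : IsCompact S := (isCompact_closedBall 0 1).of_isClosed_subset hclosed hsub
  have hne : S.Nonempty := ⟨Pi.single ⟨0, hn⟩ 1, by
    simp [hS, Pi.single_apply]⟩
  have hcont : Continuous (qA G) := by
    unfold qA mulA
    fun_prop
  obtain ⟨x, hxS, hx⟩ := hcomp.exists_isMaxOn hne hcont.continuousOn
  have hmax : ∀ y, qA G y ≤ qA G x * ∑ v, y v ^ 2 := by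
    intro y
    by_cases h0 : ∑ v, y v ^ 2 = 0
    · have : ∀ v, y v = 0 := by
        intro v
        have := (sum_eq_zero_iff_of_nonneg (fun v _ => sq_nonneg (y v))).1 h0 v (mem_univ v)
        exact pow_eq_zero_iff (two_ne_zero) |>.1 this
      have : qA G y = 0 := by simp [qA, this]
      rw [this, h0]; simp
    · have hp : 0 < ∑ v, y v ^ 2 := lt_of_le_of_ne (sum_nonneg fun v _ => sq_nonneg _) (Ne.symm h0)
      set r := ∑ v, y v ^ 2 with hr
      have hsq : (Real.sqrt r)⁻¹ ^ 2 = r⁻¹ := by rw [inv_pow, Real.sq_sqrt hp.le]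
      have hmem : (fun v => (Real.sqrt r)⁻¹ * y v) ∈ S := by
        simp only [hS, Set.mem_ofPred_eq, mul_pow, hsq, ← mul_sum]
        rw [← hr]; field_simp
      have := hx hmem
      simp only [Set.mem_ofPred_eq] at this
      rw [qA_smul, hsq] at this
      rw [inv_mul_le_iff₀ hp] at this
      linarith
  refine ⟨qA G x, fun v => |x v|, fun v => abs_nonneg _, ?_, ?_, hmax⟩
  · simp only [sq_abs]; exact hxS
  · apply le_antisymm
    · have := hmax (fun v => |x v|)
      simp only [sq_abs] at this
      rw [show ∑ v, x v ^ 2 = 1 from hxS] at this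
      linarith
    · exact qA_abs G x

lemma toLin_apply' {n : ℕ} (G : SimpleGraph (Fin n)) (x : Fin n → ℝ) [DecidableRel G.Adj] (v : Fin n) :
    Matrix.toLin' (G.adjMatrix ℝ) x v = mulA G x v := by
  rw [Matrix.toLin'_apply]
  simp only [Matrix.mulVec, dotProduct, mulA, SimpleGraph.adjMatrix_apply]
  refine sum_congr rfl fun u _ => ?_
  unfold aa
  congr

lemma perron_aux {n : ℕ} (hn : 0 < n) (G : SimpleGraph (Fin n)) :
    ∃ (x : Fin n → ℝ), (∀ v, 0 ≤ x v) ∧ (∑ v, x v ^ 2 = 1) ∧ (∀ v, mulA G x v = lam1 G * x v) ∧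
      ∀ y, qA G y ≤ lam1 G * ∑ v, y v ^ 2 := by
  classical
  obtain ⟨μ, x, hx0, hx1, hq, hmax⟩ := exists_max hn G
  have heig := eig_of_max G μ x hmax (by rw [hq, hx1, mul_one])
  have hgr : IsGreatest {μ : ℝ | Module.End.HasEigenvalue (Matrix.toLin' (G.adjMatrix ℝ)) μ} μ := by
    constructor
    · refine Module.End.hasEigenvalue_of_hasEigenvector (x := x) ⟨?_, ?_⟩
      · rw [Module.End.mem_eigenspace_iff]
        ext v
        rw [toLin_apply', heig]; simp
      · rintro rfl
        simp at hx1
    · intro ν hν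
      obtain ⟨y, hy⟩ := hν.exists_hasEigenvector
      have h1 : ∀ v, mulA G y v = ν * y v := by
        intro v
        have := congrFun hy.apply_eq_smul v
        rw [toLin_apply'] at this
        simpa using this
      have h2 : qA G y = ν * ∑ v, y v ^ 2 := by
        simp only [qA, h1, mul_sum]
        exact sum_congr rfl fun v _ => by ring
      have h3 := hmax y
      rw [h2] at h3
      have h4 : 0 < ∑ v, y v ^ 2 := by
        apply lt_of_le_of_ne (sum_nonneg fun v _ => sq_nonneg _)
        intro h0
        apply hy.2
        ext v
        have := (sum_eq_zero_iff_of_nonneg (fun v _ => sq_nonneg (y v))).1 h0.symm v (mem_univ v)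
        exact pow_eq_zero_iff (two_ne_zero) |>.1 this
      exact le_of_mul_le_mul_right h3 h4
  have hl : lam1 G = μ := by
    have := hgr.csSup_eq
    rw [← this]
    unfold lam1
    congr!
  rw [hl]
  exact ⟨x, hx0, hx1, heig, hmax⟩

lemma rayleigh {n : ℕ} (hn : 0 < n) (G : SimpleGraph (Fin n)) (y : Fin n → ℝ) :
    qA G y ≤ lam1 G * ∑ v, y v ^ 2 := by
  obtain ⟨x, _, _, _, h⟩ := perron_aux hn G
  exact h y

/-- Perron vector, normalised to have maximum entry `1`. -/
lemma perron {n : ℕ} (hn : 0 < n) (G : SimpleGraph (Fin n)) :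
    ∃ (x : Fin n → ℝ), (∀ v, 0 ≤ x v) ∧ (∀ v, x v ≤ 1) ∧ (∃ z, x z = 1) ∧
      (∀ v, mulA G x v = lam1 G * x v) := by
  obtain ⟨x, hx0, hx1, heig, _⟩ := perron_aux hn G
  have : Nonempty (Fin n) := ⟨⟨0, hn⟩⟩
  obtain ⟨z, hz⟩ := Finite.exists_max x
  have hzpos : 0 < x z := by
    by_contra h
    have : ∀ v, x v = 0 := fun v => le_antisymm ((hz v).trans (not_lt.1 h)) (hx0 v)
    simp [this] at hx1
  refine ⟨fun v => x v / x z, fun v => div_nonneg (hx0 v) hzpos.le,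
    fun v => (div_le_one hzpos).2 (hz v), ⟨z, div_self hzpos.ne'⟩, fun v => ?_⟩
  have : mulA G (fun v => x v / x z) v = mulA G x v / x z := by
    simp only [mulA, sum_div, mul_div_assoc]
  rw [this, heig]; ring

lemma eig_of_rayleigh_eq {n : ℕ} (hn : 0 < n) (G : SimpleGraph (Fin n)) (x : Fin n → ℝ)
    (hx : lam1 G * ∑ v, x v ^ 2 ≤ qA G x) (v : Fin n) : mulA G x v = lam1 G * x v :=
  eig_of_max G _ x (rayleigh hn G) (le_antisymm (rayleigh hn G x) hx) v

open Finset

lemma wheel_of_cycle {n : ℕ} (G : SimpleGraph (Fin n)) (m : ℕ) (hm : 3 ≤ m) (h : Fin n) (g : ℕ → Fin n)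
    (hinj : ∀ i < m, ∀ j < m, g i = g j → i = j)
    (hh : ∀ i < m, G.Adj h (g i))
    (hc : ∀ i, i + 1 < m → G.Adj (g i) (g (i + 1)))
    (hl : G.Adj (g (m - 1)) (g 0)) : ContainsCopy (wheelGraph (m + 1)) G := by
  refine ⟨⟨fun j => if j.val = 0 then h else g (j.val - 1), ?_⟩, ?_⟩
  · intro a b hab
    have ha := a.2
    have hb := b.2
    simp only at hab
    apply Fin.ext
    split_ifs at hab with h1 h2 h2
    · omega
    · exact absurd hab (hh _ (by omega)).ne
    · exact absurd hab.symm (hh _ (by omega)).ne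
    · have := hinj _ (by omega) _ (by omega) hab
      omega
  · intro a b hab
    have ha := a.2
    have hb := b.2
    obtain ⟨hne, hab⟩ := hab
    have hne' : a.val ≠ b.val := fun h => hne (Fin.ext h)
    show G.Adj (if a.val = 0 then h else g (a.val - 1)) (if b.val = 0 then h else g (b.val - 1))
    split_ifs with h1 h2 h2
    · omega
    · exact hh _ (by omega)
    · exact (hh _ (by omega)).symm
    · rcases hab with h | h | h | h | h | h
      · omega
      · omega
      · have := hc (a.val - 1) (by omega)
        rwa [show a.val - 1 + 1 = b.val - 1 by omega] at this
      · have := hc (b.val - 1) (by omega)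
        rw [show b.val - 1 + 1 = a.val - 1 by omega] at this
        exact this.symm
      · rw [show a.val - 1 = 0 by omega, show b.val - 1 = m - 1 by omega]
        exact hl.symm
      · rw [show b.val - 1 = 0 by omega, show a.val - 1 = m - 1 by omega]
        exact hl

lemma cycle_of_wheel {n : ℕ} (G : SimpleGraph (Fin n)) (m : ℕ) (hm : 3 ≤ m)
    (hc : ContainsCopy (wheelGraph (m + 1)) G) :
    ∃ (h : Fin n) (g : ℕ → Fin n), (∀ i < m, ∀ j < m, g i = g j → i = j) ∧
    (∀ i < m, G.Adj h (g i)) ∧ (∀ i, i + 1 < m → G.Adj (g i) (g (i + 1))) ∧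
    G.Adj (g (m - 1)) (g 0) := by
  obtain ⟨f, hf⟩ := hc
  refine ⟨f 0, fun i => if hi : i < m then f ⟨i + 1, by omega⟩ else f 0, ?_, ?_, ?_, ?_⟩
  · intro i hi j hj hij
    simp only [hi, hj, dif_pos] at hij
    have := f.injective hij
    simpa using this
  · intro i hi
    simp only [hi, dif_pos]
    apply hf
    refine ⟨?_, Or.inl rfl⟩
    intro h; simpa using congrArg Fin.val h
  · intro i hi
    simp only [hi, (by omega : i < m), dif_pos]
    apply hf
    refine ⟨?_, ?_⟩
    · intro h; simp at h
    · simp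
  · simp only [(by omega : m - 1 < m), (by omega : 0 < m), dif_pos]
    apply hf
    refine ⟨?_, ?_⟩
    · intro h; simp at h; omega
    · simp; omega

lemma wheel_of_seq {n : ℕ} (G : SimpleGraph (Fin n)) (k : ℕ) (hk : 2 ≤ k) (h : Fin n) (e o : ℕ → Fin n)
    (he : ∀ i < k, ∀ j < k, e i = e j → i = j)
    (ho : ∀ i < k, ∀ j < k, o i = o j → i = j)
    (heo : ∀ i < k, ∀ j < k, e i ≠ o j)
    (hhe : ∀ i < k, G.Adj h (e i))
    (hho : ∀ i < k, G.Adj h (o i))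
    (h1 : ∀ i < k, G.Adj (e i) (o i))
    (h2 : ∀ i, i + 1 < k → G.Adj (o i) (e (i + 1)))
    (h3 : G.Adj (o (k - 1)) (e 0)) : ContainsCopy (wheelGraph (2 * k + 1)) G := by
  apply wheel_of_cycle G (2 * k) (by omega) h (fun i => if i % 2 = 0 then e (i / 2) else o (i / 2))
  · intro i hi j hj hij
    split_ifs at hij with a b b
    · have := he _ (by omega) _ (by omega) hij; omega
    · exact absurd hij (heo _ (by omega) _ (by omega))
    · exact absurd hij.symm (heo _ (by omega) _ (by omega))
    · have := ho _ (by omega) _ (by omega) hij; omega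
  · intro i hi
    split_ifs
    · exact hhe _ (by omega)
    · exact hho _ (by omega)
  · intro i hi
    split_ifs with a b b
    · omega
    · rw [show (i + 1) / 2 = i / 2 by omega]; exact h1 _ (by omega)
    · rw [show (i + 1) / 2 = i / 2 + 1 by omega]; exact h2 _ (by omega)
    · omega
  · simp only [show (2 * k - 1) % 2 ≠ 0 by omega, if_false, show (2 * k - 1) / 2 = k - 1 by omega]
    simpa using h3

lemma exists_seq {n : ℕ} (s : Finset (Fin n)) (m : ℕ) (hm : m ≤ s.card) (hn : 0 < n) :
    ∃ l : ℕ → Fin n, (∀ i < m, l i ∈ s) ∧ (∀ i < m, ∀ j < m, l i = l j → i = j) := by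
  obtain ⟨t, hts, htc⟩ := exists_subset_card_eq hm
  let f := t.orderEmbOfFin htc
  refine ⟨fun i => if hi : i < m then f ⟨i, hi⟩ else ⟨0, hn⟩, ?_, ?_⟩
  · intro i hi
    simp only [hi, dif_pos]
    exact hts (t.orderEmbOfFin_mem htc _)
  · intro i hi j hj hij
    simp only [hi, hj, dif_pos] at hij
    have := f.injective hij
    simpa using this

/-- `K_{k,k}` in a neighbourhood gives a wheel. -/
lemma wheel_of_Kkk {n : ℕ} (G : SimpleGraph (Fin n)) (k : ℕ) (hk : 2 ≤ k) (h : Fin n)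
    (A B : Finset (Fin n)) (hA : k ≤ A.card) (hB : k ≤ B.card)
    (hhA : ∀ a ∈ A, G.Adj h a) (hhB : ∀ b ∈ B, G.Adj h b) (hAB : ∀ a ∈ A, ∀ b ∈ B, G.Adj a b) :
    ContainsCopy (wheelGraph (2 * k + 1)) G := by
  have hn : 0 < n := h.pos
  obtain ⟨e, he1, he2⟩ := exists_seq A k hA hn
  obtain ⟨o, ho1, ho2⟩ := exists_seq B k hB hn
  refine wheel_of_seq G k hk h e o he2 ho2 ?_ ?_ ?_ ?_ ?_ ?_
  · intro i hi j hj; exact (hAB _ (he1 i hi) _ (ho1 j hj)).ne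
  · intro i hi; exact hhA _ (he1 i hi)
  · intro i hi; exact hhB _ (ho1 i hi)
  · intro i hi; exact hAB _ (he1 i hi) _ (ho1 i hi)
  · intro i hi; exact (hAB _ (he1 _ hi) _ (ho1 i (by omega))).symm
  · exact (hAB _ (he1 0 (by omega)) _ (ho1 _ (by omega))).symm

/-- a path on three vertices in the opposite side. -/
lemma wheel_of_P3 {n : ℕ} (G : SimpleGraph (Fin n)) (k : ℕ) (hk : 3 ≤ k) (h : Fin n)
    (A B : Finset (Fin n)) (hA : k - 1 ≤ A.card) (hB : k + 4 ≤ B.card)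
    (hhA : ∀ a ∈ A, G.Adj h a) (hhB : ∀ b ∈ B, G.Adj h b) (hAB : ∀ a ∈ A, ∀ b ∈ B, G.Adj a b)
    (a b c : Fin n) (ha : a ∈ B) (hb : b ∈ B) (hc : c ∈ B) (hab : G.Adj a b) (hbc : G.Adj b c)
    (hac : a ≠ c) :
    ContainsCopy (wheelGraph (2 * k + 1)) G := by
  have hn : 0 < n := h.pos
  obtain ⟨l, hl1, hl2⟩ := exists_seq A (k - 1) hA hn
  obtain ⟨r, hr1, hr2⟩ := exists_seq (B \ {a, b, c}) k (by
    have := le_card_sdiff {a, b, c} B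
    have h3 : ({a, b, c} : Finset (Fin n)).card ≤ 3 := card_le_three
    omega) hn
  have hr1' : ∀ i < k, r i ∈ B ∧ r i ≠ a ∧ r i ≠ b ∧ r i ≠ c := by
    intro i hi
    have := hr1 i hi
    simp only [mem_sdiff, mem_insert, mem_singleton, not_or] at this
    exact this
  have hlB : ∀ i < k - 1, ∀ x ∈ B, l i ≠ x := fun i hi x hx => (hAB _ (hl1 i hi) _ hx).ne
  refine wheel_of_seq G k (by omega) h (fun i => if i = k - 1 then b else l i)
    (fun i => if i = k - 2 then a else if i = k - 1 then c else r i) ?_ ?_ ?_ ?_ ?_ ?_ ?_ ?_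
  · intro i hi j hj hij
    split_ifs at hij with p q q
    · omega
    · exact absurd hij.symm (hlB _ (by omega) _ hb)
    · exact absurd hij (hlB _ (by omega) _ hb)
    · exact hl2 _ (by omega) _ (by omega) hij
  · intro i hi j hj hij
    have hi' := hr1' i hi
    have hj' := hr1' j hj
    split_ifs at hij <;> first | omega | (exact hr2 _ (by omega) _ (by omega) hij) | (exfalso; tauto)
  · intro i hi j hj
    have hj' := hr1' j hj
    split_ifs with p q q' q q'
    · exact hab.ne'
    · exact hbc.ne
    · exact hj'.2.2.1.symm
    · exact hlB _ (by omega) _ ha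
    · exact hlB _ (by omega) _ hc
    · exact hlB _ (by omega) _ hj'.1
  · intro i hi
    split_ifs
    · exact hhB _ hb
    · exact hhA _ (hl1 _ (by omega))
  · intro i hi
    split_ifs
    · exact hhB _ ha
    · exact hhB _ hc
    · exact hhB _ (hr1' i hi).1
  · intro i hi
    have := (hr1' i hi).1
    split_ifs
    all_goals first
      | omega
      | assumption
      | exact hAB _ (hl1 _ (by omega)) _ (by assumption)
  · intro i hi
    split_ifs with p q q' q q'
    · exact hab
    · exact (hAB _ (hl1 _ (by omega)) _ ha).symm
    · omega
    · omega
    · omega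
    · exact (hAB _ (hl1 _ (by omega)) _ (hr1' i (by omega)).1).symm
  · simp only [show k - 1 ≠ k - 2 by omega, show 0 ≠ k - 1 by omega, if_false, if_true]
    exact (hAB _ (hl1 _ (by omega)) _ hc).symm

set_option maxHeartbeats 1000000 in
/-- two disjoint edges in the opposite side. -/
lemma wheel_of_twoEdges {n : ℕ} (G : SimpleGraph (Fin n)) (k : ℕ) (hk : 3 ≤ k) (h : Fin n)
    (A B : Finset (Fin n)) (hA : k - 1 ≤ A.card) (hB : k + 4 ≤ B.card)
    (hhA : ∀ a ∈ A, G.Adj h a) (hhB : ∀ b ∈ B, G.Adj h b) (hAB : ∀ a ∈ A, ∀ b ∈ B, G.Adj a b)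
    (a b c d : Fin n) (ha : a ∈ B) (hb : b ∈ B) (hc : c ∈ B) (hd : d ∈ B) (hab : G.Adj a b)
    (hcd : G.Adj c d) (hac : a ≠ c) (had : a ≠ d) (hbc : b ≠ c) (hbd : b ≠ d) :
    ContainsCopy (wheelGraph (2 * k + 1)) G := by
  have hn : 0 < n := h.pos
  obtain ⟨l, hl1, hl2⟩ := exists_seq A (k - 1) hA hn
  obtain ⟨r, hr1, hr2⟩ := exists_seq (B \ {a, b, c, d}) k (by
    have := le_card_sdiff {a, b, c, d} B
    have h3 : ({a, b, c, d} : Finset (Fin n)).card ≤ 4 := card_le_four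
    omega) hn
  have hr1' : ∀ i < k, r i ∈ B ∧ r i ≠ a ∧ r i ≠ b ∧ r i ≠ c ∧ r i ≠ d := by
    intro i hi
    have := hr1 i hi
    simp only [mem_sdiff, mem_insert, mem_singleton, not_or] at this
    exact this
  have hlB : ∀ i < k - 1, ∀ x ∈ B, l i ≠ x := fun i hi x hx => (hAB _ (hl1 i hi) _ hx).ne
  have hlA : ∀ i < k - 1, ∀ x ∈ B, G.Adj (l i) x := fun i hi x hx => (hAB _ (hl1 i hi) _ hx)
  refine wheel_of_seq G k (by omega) h
    (fun i => if i = 0 then l 0 else if i = 1 then b else if i = 2 then c else l (i - 1))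
    (fun i => if i = 0 then a else if i = 1 then l 1 else if i = 2 then d else r i)
    ?_ ?_ ?_ ?_ ?_ ?_ ?_ ?_
  · intro i hi j hj hij
    split_ifs at hij
    all_goals first
      | contradiction
      | (exfalso; revert hij; assumption)
      | (exfalso; replace hij := hij.symm; revert hij; assumption)
      | omega
      | (exfalso; revert hij; exact hlB _ (by omega) _ (by assumption))
      | (exfalso; replace hij := hij.symm; revert hij; exact hlB _ (by omega) _ (by assumption))
      | (have := hl2 _ (by omega) _ (by omega) hij; omega)
  · intro i hi j hj hij
    obtain ⟨i1, i2, i3, i4, i5⟩ := hr1' i hi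
    obtain ⟨j1, j2, j3, j4, j5⟩ := hr1' j hj
    split_ifs at hij
    all_goals first
      | contradiction
      | (exfalso; revert hij; assumption)
      | (exfalso; replace hij := hij.symm; revert hij; assumption)
      | omega
      | (exfalso; revert hij; exact hlB _ (by omega) _ (by assumption))
      | (exfalso; replace hij := hij.symm; revert hij; exact hlB _ (by omega) _ (by assumption))
      | exact hr2 _ (by omega) _ (by omega) hij
  · intro i hi j hj hij
    obtain ⟨j1, j2, j3, j4, j5⟩ := hr1' j hj
    have hab' := hab.ne
    have hcd' := hcd.ne
    split_ifs at hij
    all_goals first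
      | contradiction
      | (exfalso; revert hij; assumption)
      | (exfalso; replace hij := hij.symm; revert hij; assumption)
      | omega
      | (exfalso; revert hij; exact hlB _ (by omega) _ (by assumption))
      | (exfalso; replace hij := hij.symm; revert hij; exact hlB _ (by omega) _ (by assumption))
      | (have := hl2 _ (by omega) _ (by omega) hij; omega)
  · intro i hi
    split_ifs
    all_goals first
      | exact hhB _ (by assumption)
      | exact hhA _ (hl1 _ (by omega))
  · intro i hi
    have := (hr1' i hi).1
    split_ifs
    all_goals first
      | exact hhB _ (by assumption)
      | exact hhA _ (hl1 _ (by omega))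
  · intro i hi
    have := (hr1' i hi).1
    split_ifs
    all_goals first
      | contradiction
      | omega
      | exact hlA _ (by omega) _ (by assumption)
      | exact (hlA _ (by omega) _ (by assumption)).symm
      | assumption
  · intro i hi
    have := (hr1' i (by omega)).1
    split_ifs
    all_goals first
      | contradiction
      | omega
      | exact hlA _ (by omega) _ (by assumption)
      | exact (hlA _ (by omega) _ (by assumption)).symm
      | assumption
  · have := (hr1' (k - 1) (by omega)).1
    simp only [if_true]
    split_ifs
    all_goals first
      | omega
      | exact (hlA _ (by omega) _ (by assumption)).symm

open Finset

noncomputable def nb {n : ℕ} (G : SimpleGraph (Fin n)) (v : Fin n) : Finset (Fin n) := by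
  classical
  exact univ.filter fun u => G.Adj v u

@[simp] lemma mem_nb {n : ℕ} (G : SimpleGraph (Fin n)) (v u : Fin n) : u ∈ nb G v ↔ G.Adj v u := by
  simp [nb]

lemma degIn_eq {n : ℕ} (G : SimpleGraph (Fin n)) (A : Finset (Fin n)) (v : Fin n) :
    degIn G A v = (A ∩ nb G v).card := by
  classical
  unfold degIn
  congr 1
  ext u; simp

lemma degIn_le {n : ℕ} (G : SimpleGraph (Fin n)) (A : Finset (Fin n)) (v : Fin n) :
    degIn G A v ≤ A.card := by
  rw [degIn_eq]; exact card_le_card inter_subset_left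

lemma kst_nat {n : ℕ} (k : ℕ) (hk : 2 ≤ k) (G : SimpleGraph (Fin n)) (hG : WheelFree (2 * k + 1) G)
    (v : Fin n) : ∑ u ∈ nb G v, (degIn G (nb G v) u + 1 - k) ^ k ≤ k * n ^ k := by
  classical
  set A := nb G v with hA
  have h1 : ∑ u ∈ A, (powersetCard k (A ∩ nb G u)).card ≤ n.choose k * k := by
    have e1 : ∀ u ∈ A, (powersetCard k (A ∩ nb G u)).card
        = ((powersetCard k (univ : Finset (Fin n))).bipartiteAbove
            (fun u S => S ⊆ A ∩ nb G u) u).card := by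
      intro u _
      congr 1
      ext S
      simp only [bipartiteAbove, mem_filter, mem_powersetCard, subset_univ, true_and]
      tauto
    rw [sum_congr rfl e1, sum_card_bipartiteAbove_eq_sum_card_bipartiteBelow]
    refine (sum_le_card_nsmul _ _ k ?_).trans ?_
    · intro S hS
      by_contra hlt
      push Not at hlt
      apply hG
      rw [mem_powersetCard] at hS
      set B := A.bipartiteBelow (fun u S => S ⊆ A ∩ nb G u) S with hB
      have hB' : ∀ b ∈ B, b ∈ A ∧ S ⊆ A ∩ nb G b := by
        intro b hb
        rw [hB, bipartiteBelow, mem_filter] at hb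
        exact hb
      have hBne : B.Nonempty := card_pos.1 (by omega)
      obtain ⟨b0, hb0⟩ := hBne
      refine wheel_of_Kkk G k hk v S B hS.2.ge hlt.le ?_ ?_ ?_
      · intro a ha
        have := mem_inter.1 ((hB' b0 hb0).2 ha)
        simpa [hA] using this.1
      · intro b hb
        simpa [hA] using (hB' b hb).1
      · intro a ha b hb
        have := mem_inter.1 ((hB' b hb).2 ha)
        exact ((mem_nb G b a).1 this.2).symm
    · simp
  have h2 : ∀ u ∈ A, (degIn G A u + 1 - k) ^ k ≤ k.factorial * (powersetCard k (A ∩ nb G u)).card := by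
    intro u _
    rw [card_powersetCard, ← Nat.descFactorial_eq_factorial_mul_choose, degIn_eq]
    exact Nat.pow_sub_le_descFactorial _ _
  calc _ ≤ ∑ u ∈ A, k.factorial * (powersetCard k (A ∩ nb G u)).card := sum_le_sum h2
    _ = k.factorial * ∑ u ∈ A, (powersetCard k (A ∩ nb G u)).card := by rw [mul_sum]
    _ ≤ k.factorial * (n.choose k * k) := by gcongr
    _ = n.descFactorial k * k := by rw [Nat.descFactorial_eq_factorial_mul_choose]; ring
    _ ≤ n ^ k * k := by gcongr; exact Nat.descFactorial_le_pow _ _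
    _ = _ := by ring

lemma kst (k : ℕ) (hk : 2 ≤ k) (γ : ℝ) (hγ : 0 < γ) : ∃ N : ℕ, ∀ n : ℕ, N ≤ n →
    ∀ G : SimpleGraph (Fin n), WheelFree (2 * k + 1) G → ∀ v,
      ∑ u ∈ nb G v, (degIn G (nb G v) u : ℝ) ≤ γ * n ^ 2 := by
  obtain ⟨N, hN⟩ := exists_nat_gt (max (2 * k / γ) (k / (γ / 2) ^ k))
  refine ⟨N + 1, fun n hn G hG v => ?_⟩
  have hnN : (N : ℝ) ≤ n := by exact_mod_cast (by omega : N ≤ n)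
  have hn1 : 2 * k / γ < n := lt_of_lt_of_le (lt_of_le_of_lt (le_max_left _ _) hN) hnN
  have hn2 : k / (γ / 2) ^ k < n := lt_of_lt_of_le (lt_of_le_of_lt (le_max_right _ _) hN) hnN
  have hnpos : (0 : ℝ) < n := by exact_mod_cast (by omega : 0 < n)
  by_contra hlt
  push Not at hlt
  set A := nb G v with hA
  have hAn : (A.card : ℝ) ≤ n := by
    have := card_le_univ A
    simp at this
    exact_mod_cast this
  set f : Fin n → ℝ := fun u => ((degIn G A u + 1 - k : ℕ) : ℝ) with hf
  have hf0 : ∀ u ∈ A, 0 ≤ f u := fun u _ => Nat.cast_nonneg _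
  have h1 : ∑ u ∈ A, f u ^ k ≤ k * n ^ k := by
    have := kst_nat k hk G hG v
    rw [← hA] at this
    simp only [hf]
    exact_mod_cast this
  have h2 : ∀ u ∈ A, (degIn G A u : ℝ) - k ≤ f u := by
    intro u _
    have : degIn G A u ≤ (degIn G A u + 1 - k) + k := by omega
    have : (degIn G A u : ℝ) ≤ ((degIn G A u + 1 - k : ℕ) : ℝ) + k := by exact_mod_cast this
    simp only [hf]; linarith
  have h3 : γ / 2 * n ^ 2 ≤ ∑ u ∈ A, f u := by
    have h := sum_le_sum h2
    rw [sum_sub_distrib, sum_const, nsmul_eq_mul] at h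
    rw [div_lt_iff₀ hγ] at hn1
    have : (A.card : ℝ) * k ≤ n * k := by gcongr
    nlinarith
  obtain ⟨m, rfl⟩ : ∃ m, k = m + 1 := ⟨k - 1, by omega⟩
  have h4 := pow_sum_div_card_le_sum_pow (s := A) (f := f) hf0 m
  have hAne : 0 < A.card := by
    rw [card_pos]
    by_contra he
    rw [not_nonempty_iff_eq_empty] at he
    rw [he] at h3
    simp at h3
    nlinarith [mul_pos (half_pos hγ) (pow_pos hnpos 2)]
  have hAp : (0 : ℝ) < A.card := by exact_mod_cast hAne
  rw [div_le_iff₀ (pow_pos hAp m)] at h4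
  have h5 : (γ / 2 * n ^ 2) ^ (m + 1) ≤ (((m + 1 : ℕ) : ℝ) * n ^ (m + 1)) * n ^ m := by
    calc _ ≤ (∑ u ∈ A, f u) ^ (m + 1) := by gcongr
      _ ≤ (∑ u ∈ A, f u ^ (m + 1)) * A.card ^ m := h4
      _ ≤ _ := by gcongr
  have h6 : (γ / 2) ^ (m + 1) * n ≤ ((m + 1 : ℕ) : ℝ) := by
    have e : (γ / 2 * (n : ℝ) ^ 2) ^ (m + 1) = ((γ / 2) ^ (m + 1) * n) * (n ^ (m + 1) * n ^ m) := by ring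
    rw [e, mul_assoc (((m + 1 : ℕ) : ℝ))] at h5
    exact le_of_mul_le_mul_right h5 (by positivity)
  rw [div_lt_iff₀ (by positivity)] at hn2
  linarith

open Finset

lemma cutCount_eq {n : ℕ} (G : SimpleGraph (Fin n)) (S : Finset (Fin n)) :
    (cutCount G S : ℝ) = ∑ u ∈ S, ∑ w ∈ Sᶜ, aa G u w := by
  classical
  have h : cutCount G S = ∑ u ∈ S, degIn G Sᶜ u := by
    unfold cutCount degIn
    rw [← card_sigma]
    refine card_bij' (fun p _ => ⟨p.1, p.2⟩) (fun p _ => (p.1, p.2)) ?_ ?_ ?_ ?_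
    · intro p hp
      simp only [mem_filter, mem_univ, true_and] at hp
      simp [hp]
    · intro p hp
      simp only [mem_sigma, mem_filter, mem_compl] at hp
      simp [hp]
    · intro p _; rfl
    · intro p _; rfl
  rw [h]
  push_cast
  exact sum_congr rfl fun u _ => (sum_aa G _ u).symm

lemma cutCount_compl {n : ℕ} (G : SimpleGraph (Fin n)) (S : Finset (Fin n)) :
    cutCount G Sᶜ = cutCount G S := by
  have : (cutCount G Sᶜ : ℝ) = cutCount G S := by
    rw [cutCount_eq, cutCount_eq, compl_compl, sum_comm]
    exact sum_congr rfl fun u _ => sum_congr rfl fun w _ => aa_symm _ _ _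
  exact_mod_cast this

lemma IsMaxCut.symm' {n : ℕ} {G : SimpleGraph (Fin n)} {L R : Finset (Fin n)} (h : IsMaxCut G L R) :
    IsMaxCut G R L := by
  obtain ⟨rfl, h⟩ := h
  exact ⟨by simp, fun S' => by rw [cutCount_compl]; exact h S'⟩

lemma maxcut_deg {n : ℕ} {G : SimpleGraph (Fin n)} {L R : Finset (Fin n)} (h : IsMaxCut G L R)
    {v : Fin n} (hv : v ∈ L) : degIn G L v ≤ degIn G R v := by
  classical
  obtain ⟨rfl, h⟩ := h
  have h1 : (cutCount G (L.erase v) : ℝ) ≤ cutCount G L := by exact_mod_cast h _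
  rw [cutCount_eq, cutCount_eq] at h1
  have hc : (L.erase v)ᶜ = insert v Lᶜ := by
    ext u; simp only [mem_compl, mem_erase, mem_insert]; tauto
  rw [hc] at h1
  have h2 : ∀ u ∈ L.erase v, ∑ w ∈ insert v Lᶜ, aa G u w = aa G v u + ∑ w ∈ Lᶜ, aa G u w := by
    intro u _
    rw [sum_insert (by simpa using hv), aa_symm]
  rw [sum_congr rfl h2, sum_add_distrib, ← add_sum_erase L _ hv] at h1
  have h3 : ∑ u ∈ L.erase v, aa G v u = degIn G L v := by
    rw [← sum_aa, ← add_sum_erase L _ hv, aa_self, zero_add]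
  rw [h3, sum_aa] at h1
  have : (degIn G L v : ℝ) ≤ degIn G Lᶜ v := by linarith
  exact_mod_cast this

def bipG {n : ℕ} (S : Finset (Fin n)) : SimpleGraph (Fin n) where
  Adj u v := (u ∈ S ∧ v ∉ S) ∨ (u ∉ S ∧ v ∈ S)
  symm := by
    constructor
    intro a b h
    tauto
  loopless := by
    constructor
    intro a h
    tauto

lemma bipG_free {n : ℕ} (S : Finset (Fin n)) (k : ℕ) (hk : 2 ≤ k) : WheelFree (2 * k + 1) (bipG S) := by
  intro h
  obtain ⟨h, g, _, h2, h3, _⟩ := cycle_of_wheel _ (2 * k) (by omega) h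
  have a := h2 0 (by omega)
  have b := h2 1 (by omega)
  have c := h3 0 (by omega)
  simp only [bipG, zero_add] at a b c
  tauto

lemma lam_lower {n : ℕ} (hn : 0 < n) (k : ℕ) (hk : 2 ≤ k) (G : SimpleGraph (Fin n))
    (hG : IsSpexWheel (2 * k + 1) G) : (n : ℝ) / 2 - 1 ≤ lam1 G := by
  classical
  obtain ⟨S, _, hS⟩ := exists_subset_card_eq (s := (univ : Finset (Fin n))) (n := n / 2)
    (by simp; omega)
  have h1 := hG.2 _ (bipG_free S k hk)
  have h2 := rayleigh hn (bipG S) (fun _ => 1)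
  have h3 : qA (bipG S) (fun _ => 1) = 2 * ((n / 2 : ℕ) : ℝ) * (n - (n / 2 : ℕ)) := by
    have hc : ((Sᶜ.card : ℕ) : ℝ) = n - (n / 2 : ℕ) := by
      rw [card_compl, hS]
      simp only [Fintype.card_fin]
      rw [Nat.cast_sub (by omega)]
    have e1 : ∀ v, mulA (bipG S) (fun _ => 1) v
        = if v ∈ S then (n : ℝ) - (n / 2 : ℕ) else ((n / 2 : ℕ) : ℝ) := by
      intro v
      simp only [mulA, mul_one]
      rw [← sum_add_sum_compl S]
      split_ifs with hv
      · rw [sum_eq_zero, sum_congr rfl (g := fun _ => (1 : ℝ))]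
        · simp [hc]
        · intro u hu
          exact aa_of_adj (Or.inl ⟨hv, by simpa using hu⟩)
        · intro u hu
          apply aa_of_not
          simp only [bipG]; tauto
      · rw [sum_congr rfl (g := fun _ => (1 : ℝ)), add_comm, sum_eq_zero]
        · simp [hS]
        · intro u hu
          apply aa_of_not
          have : u ∉ S := by simpa using hu
          simp only [bipG]; tauto
        · intro u hu
          exact aa_of_adj (Or.inr ⟨hv, hu⟩)
    simp only [qA, e1, one_mul]
    rw [← sum_add_sum_compl S]
    rw [sum_congr rfl (g := fun _ => (n : ℝ) - (n / 2 : ℕ)) (fun u hu => by simp [hu]),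
      sum_congr rfl (s₁ := Sᶜ) (g := fun _ => ((n / 2 : ℕ) : ℝ))
        (fun u hu => by rw [if_neg (by simpa using hu)])]
    simp only [sum_const, nsmul_eq_mul, hS, hc]
    ring
  rw [h3] at h2
  simp only [one_pow, sum_const, card_univ, Fintype.card_fin, nsmul_eq_mul, mul_one] at h2
  have hnp : (1 : ℝ) ≤ n := by exact_mod_cast hn
  have h4 : lam1 (bipG S) * n ≤ lam1 G * n := by gcongr
  have h5 : (n : ℝ) - 1 ≤ 2 * ((n / 2 : ℕ) : ℝ) := by
    have : n ≤ 2 * (n / 2) + 1 := by omega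
    have : (n : ℝ) ≤ 2 * ((n / 2 : ℕ) : ℝ) + 1 := by exact_mod_cast this
    linarith
  have h6 : 2 * ((n / 2 : ℕ) : ℝ) ≤ n := by
    have : 2 * (n / 2) ≤ n := by omega
    exact_mod_cast this
  by_contra hlt
  push Not at hlt
  have : lam1 G * n < (n / 2 - 1) * n := by
    apply mul_lt_mul_of_pos_right hlt; linarith
  nlinarith

/-- first structural lemma: stability. -/
lemma struct1 (k : ℕ) (hk : 2 ≤ k) (θ : ℝ) (hθ : 0 < θ) : ∃ N : ℕ, ∀ n : ℕ, N ≤ n →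
    ∀ G : SimpleGraph (Fin n), IsSpexWheel (2 * k + 1) G → ∀ L R, IsMaxCut G L R →
      (L.card : ℝ) ≤ (1 / 2 + θ) * n ∧ (R.card : ℝ) ≤ (1 / 2 + θ) * n ∧
      ∑ u ∈ L, ((R.card : ℝ) - degIn G R u) ≤ θ ^ 2 * n ^ 2 ∧
      (∀ v ∈ L, (degIn G L v : ℝ) ≤ θ * n) := by
  classical
  obtain ⟨N, hN⟩ := kst k hk (θ ^ 2 / 3) (by positivity)
  obtain ⟨M, hM⟩ := exists_nat_gt (3 / θ ^ 2)
  refine ⟨N + M + 2, fun n hn G hG L R hLR => ?_⟩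
  have hkst := hN n (by omega) G hG.1
  have hn0 : 0 < n := by omega
  have hnp : (0 : ℝ) < n := by exact_mod_cast hn0
  have hnM : 3 / θ ^ 2 < n := hM.trans_le (by exact_mod_cast (by omega : M ≤ n))
  have hn2 : (2 : ℝ) ≤ n := by exact_mod_cast (by omega : 2 ≤ n)
  have hlam := lam_lower hn0 k hk G hG
  obtain ⟨x, hx0, hx1, ⟨z, hz⟩, hx⟩ := perron hn0 G
  have hR : R = Lᶜ := hLR.1
  -- the square of the spectral radius
  have hsq : lam1 G ^ 2 ≤ θ ^ 2 / 3 * n ^ 2 + cutCount G L := by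
    have e1 : lam1 G ^ 2 = ∑ u, aa G z u * mulA G x u := by
      have : mulA G x z = lam1 G := by rw [hx, hz, mul_one]
      simp only [hx]
      have e : ∀ u, aa G z u * (lam1 G * x u) = lam1 G * (aa G z u * x u) := fun u => by ring
      simp only [e, ← mul_sum]
      change _ = lam1 G * mulA G x z
      rw [this]; ring
    have e2 : ∑ u, aa G z u * mulA G x u = ∑ u ∈ nb G z, mulA G x u := by
      unfold nb
      rw [sum_filter]
      refine sum_congr rfl fun u _ => ?_
      unfold aa
      split_ifs <;> simp
    have e3 : ∀ u ∈ nb G z, mulA G x u ≤ degIn G (nb G z) u + ∑ w ∈ (nb G z)ᶜ, aa G u w := by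
      intro u _
      rw [← sum_aa, sum_add_sum_compl]
      unfold mulA
      refine sum_le_sum fun w _ => ?_
      have := aa_nonneg G u w
      have := hx1 w
      nlinarith
    have e4 : ((cutCount G (nb G z) : ℕ) : ℝ) ≤ cutCount G L := by exact_mod_cast hLR.2 _
    rw [e1, e2]
    refine (sum_le_sum e3).trans ?_
    rw [sum_add_distrib, ← cutCount_eq]
    linarith [hkst z]
  have hcut : (1 / 4 - θ ^ 2 * (2 / 3)) * n ^ 2 ≤ cutCount G L := by
    have : (n / 2 - 1 : ℝ) ^ 2 ≤ lam1 G ^ 2 := by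
      apply pow_le_pow_left₀ _ hlam; linarith
    rw [div_lt_iff₀ (by positivity)] at hnM
    nlinarith
  have hRc : (R.card : ℝ) = n - L.card := by
    rw [hR, card_compl, Nat.cast_sub (by simpa using card_le_univ L)]; simp
  have hmiss : ∑ u ∈ L, ((R.card : ℝ) - degIn G R u) = L.card * R.card - cutCount G L := by
    rw [sum_sub_distrib, cutCount_eq, ← hR]
    simp only [sum_aa]; simp
  have hcut2 : (cutCount G L : ℝ) ≤ L.card * R.card := by
    have : 0 ≤ ∑ u ∈ L, ((R.card : ℝ) - degIn G R u) := by
      refine sum_nonneg fun u _ => ?_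
      have : (degIn G R u : ℝ) ≤ R.card := by exact_mod_cast degIn_le _ _ _
      linarith
    linarith
  have hθn : 0 < θ * n := by positivity
  have hLsq : ((L.card : ℝ) - n / 2) ^ 2 ≤ (θ * n) ^ 2 := by
    rw [hRc] at hcut2
    have : 0 < θ ^ 2 * (n : ℝ) ^ 2 := by positivity
    nlinarith
  have habs := abs_le_of_sq_le_sq' hLsq hθn.le
  have hmiss2 : ∑ u ∈ L, ((R.card : ℝ) - degIn G R u) ≤ θ ^ 2 * (2 / 3) * n ^ 2 := by
    rw [hmiss, hRc]
    nlinarith [sq_nonneg ((L.card : ℝ) - n / 2)]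
  have hpos : 0 ≤ θ ^ 2 * (n : ℝ) ^ 2 := by positivity
  refine ⟨by linarith [habs.2], by rw [hRc]; linarith [habs.1], by linarith, ?_⟩
  intro v hv
  have hd : (degIn G L v : ℝ) ≤ degIn G R v := by exact_mod_cast maxcut_deg hLR hv
  have hd0 : (0 : ℝ) ≤ degIn G L v := Nat.cast_nonneg _
  -- count edges between the two neighbourhoods
  have hsub : ∀ u ∈ L ∩ nb G v, (degIn G R v : ℝ) ≤ degIn G (nb G v) u + ((R.card : ℝ) - degIn G R u) := by
    intro u _
    have h1 : degIn G R v + degIn G R u ≤ R.card + degIn G (nb G v) u := by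
      rw [degIn_eq, degIn_eq, degIn_eq]
      rw [← card_union_add_card_inter]
      apply Nat.add_le_add
      · exact card_le_card (union_subset inter_subset_left inter_subset_left)
      · apply card_le_card
        intro w hw
        simp only [mem_inter] at hw ⊢
        exact ⟨hw.1.2, hw.2.2⟩
    have : (degIn G R v : ℝ) + degIn G R u ≤ R.card + degIn G (nb G v) u := by exact_mod_cast h1
    linarith
  have hsum := sum_le_sum hsub
  rw [sum_const, nsmul_eq_mul, ← degIn_eq, sum_add_distrib] at hsum
  have h1 : ∑ u ∈ L ∩ nb G v, (degIn G (nb G v) u : ℝ) ≤ θ ^ 2 / 3 * n ^ 2 :=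
    (sum_le_sum_of_subset_of_nonneg inter_subset_right (fun _ _ _ => Nat.cast_nonneg _)).trans (hkst v)
  have h2 : ∑ u ∈ L ∩ nb G v, ((R.card : ℝ) - degIn G R u) ≤ θ ^ 2 * (2 / 3) * n ^ 2 :=
    (sum_le_sum_of_subset_of_nonneg inter_subset_left (fun u _ _ => by
      have : (degIn G R u : ℝ) ≤ R.card := by exact_mod_cast degIn_le _ _ _
      linarith)).trans hmiss2
  have h3 : (degIn G L v : ℝ) ^ 2 ≤ (θ * n) ^ 2 := by nlinarith
  exact (abs_le_of_sq_le_sq' h3 hθn.le).2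

open Finset

def replG {n : ℕ} (G : SimpleGraph (Fin n)) (s : Fin n) (T : Finset (Fin n)) : SimpleGraph (Fin n) where
  Adj u v := u ≠ v ∧ ((u = s ∧ v ∈ T) ∨ (v = s ∧ u ∈ T) ∨ (u ≠ s ∧ v ≠ s ∧ G.Adj u v))
  symm := by
    constructor
    intro a b h
    refine ⟨h.1.symm, ?_⟩
    have := G.adj_comm a b
    tauto
  loopless := by
    constructor
    intro a h
    exact h.1 rfl

lemma replG_free {n : ℕ} (G : SimpleGraph (Fin n)) (s : Fin n) (T : Finset (Fin n)) (t : ℕ)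
    (hG : WheelFree t G)
    (hT : ∀ W : Finset (Fin n), W.card ≤ t → ∃ s', s' ∉ W ∧ ∀ w ∈ W, w ∈ T → G.Adj s' w) :
    WheelFree t (replG G s T) := by
  classical
  rintro ⟨f, hf⟩
  obtain ⟨s', hs', hadj⟩ := hT (univ.image f) (by
    refine card_image_le.trans ?_; simp)
  have hs'' : ∀ a, f a ≠ s' := by
    intro a h
    exact hs' (mem_image.2 ⟨a, mem_univ _, h⟩)
  apply hG
  refine ⟨⟨fun a => if f a = s then s' else f a, ?_⟩, ?_⟩
  · intro a b hab
    simp only at hab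
    split_ifs at hab with h1 h2 h2
    · exact f.injective (h1.trans h2.symm)
    · exact absurd hab.symm (hs'' _)
    · exact absurd hab (hs'' _)
    · exact f.injective hab
  · intro a b hab
    have := hf a b hab
    obtain ⟨hne, h⟩ := this
    show G.Adj (if f a = s then s' else f a) (if f b = s then s' else f b)
    split_ifs with h1 h2 h2
    · exact absurd (h1.trans h2.symm) hne
    · have : f b ∈ T := by tauto
      exact hadj _ (mem_image.2 ⟨b, mem_univ _, rfl⟩) this
    · have : f a ∈ T := by tauto
      exact (hadj _ (mem_image.2 ⟨a, mem_univ _, rfl⟩) this).symm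
    · tauto

lemma replG_spec {n : ℕ} (hn : 0 < n) (G : SimpleGraph (Fin n)) (s : Fin n) (T : Finset (Fin n)) (t : ℕ)
    (hG : IsSpexWheel t G) (hs : s ∉ T) (hfree : WheelFree t (replG G s T)) (x : Fin n → ℝ)
    (hx0 : ∀ v, 0 ≤ x v) (hx : ∀ v, mulA G x v = lam1 G * x v) :
    ∑ u ∈ T, x u ≤ mulA G x s := by
  classical
  by_contra hlt
  push Not at hlt
  have hle := hG.2 _ hfree
  set G' := replG G s T with hG'
  have haa : ∀ u v, aa G' u v = aa G u v
      + (if u = s then (if v ∈ T then 1 else 0) - aa G s v else 0)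
      + (if v = s then (if u ∈ T then 1 else 0) - aa G u s else 0) := by
    intro u v
    by_cases hu : u = s
    · by_cases hv : v = s
      · subst hu; subst hv
        simp [aa_self, hs]
      · subst hu
        simp only [hv, if_true, if_false]
        by_cases hvT : v ∈ T
        · rw [aa_of_adj (G := G')]
          · simp [hvT]
          · exact ⟨Ne.symm hv, Or.inl ⟨rfl, hvT⟩⟩
        · rw [aa_of_not (G := G')]
          · simp [hvT]
          · rintro ⟨_, h⟩; tauto
    · by_cases hv : v = s
      · subst hv
        simp only [hu, if_true, if_false]
        by_cases huT : u ∈ T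
        · rw [aa_of_adj (G := G')]
          · simp [huT]
          · exact ⟨hu, Or.inr (Or.inl ⟨rfl, huT⟩)⟩
        · rw [aa_of_not (G := G')]
          · simp [huT]
          · rintro ⟨_, h⟩; tauto
      · simp only [hu, hv, if_false, add_zero]
        by_cases h : G.Adj u v
        · rw [aa_of_adj h, aa_of_adj (G := G')]
          exact ⟨h.ne, Or.inr (Or.inr ⟨hu, hv, h⟩)⟩
        · rw [aa_of_not h, aa_of_not (G := G')]
          rintro ⟨_, h⟩; tauto
  have hmul : ∀ v, mulA G' x v = mulA G x v
      + (if v = s then ∑ u ∈ T, x u - mulA G x s else 0)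
      + ((if v ∈ T then 1 else 0) - aa G v s) * x s := by
    intro v
    unfold mulA
    simp only [haa, add_mul, sum_add_distrib]
    congr 1
    · congr 1
      split_ifs with h
      · simp [sub_mul, sum_sub_distrib]
      · simp
    · simp
  have hq : qA G' x = qA G x + 2 * x s * (∑ u ∈ T, x u - mulA G x s) := by
    unfold qA
    simp only [hmul, mul_add, sum_add_distrib]
    have e1 : ∑ v, x v * (if v = s then ∑ u ∈ T, x u - mulA G x s else 0)
      = x s * (∑ u ∈ T, x u - mulA G x s) := by simp
    have e2 : ∑ v, x v * (((if v ∈ T then 1 else 0) - aa G v s) * x s)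
      = x s * (∑ u ∈ T, x u - mulA G x s) := by
      have : ∀ v, x v * (((if v ∈ T then (1 : ℝ) else 0) - aa G v s) * x s)
        = x s * (if v ∈ T then x v else 0) - x s * (aa G s v * x v) := by
        intro v
        rw [aa_symm G v s]
        split_ifs <;> ring
      simp only [this, sum_sub_distrib, ← mul_sum]
      simp [mulA, mul_sub]
    rw [e1, e2]; ring
  have hqG : qA G x = lam1 G * ∑ v, x v ^ 2 := by
    simp only [qA, hx, mul_sum]
    exact sum_congr rfl fun v _ => by ring
  have hsum : 0 ≤ ∑ v, x v ^ 2 := sum_nonneg fun v _ => sq_nonneg _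
  have hr := eig_of_rayleigh_eq hn G' x (by
    rw [hq, hqG]
    have := mul_nonneg (hx0 s) (sub_pos.2 hlt).le
    nlinarith) s
  rw [hmul] at hr
  simp only [if_true, hs, if_false, aa_self] at hr
  have h1 := hx s
  have h2 := mul_le_mul_of_nonneg_right hle (hx0 s)
  linarith

lemma mulA_le {n : ℕ} (G : SimpleGraph (Fin n)) (x : Fin n → ℝ) (hx0 : ∀ v, 0 ≤ x v)
    (hx1 : ∀ v, x v ≤ 1) (L : Finset (Fin n)) (v : Fin n) :
    mulA G x v ≤ degIn G L v + ∑ u ∈ Lᶜ, aa G v u * x u := by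
  unfold mulA
  rw [← sum_add_sum_compl L, ← sum_aa]
  gcongr with u _
  have := aa_nonneg G v u
  have := hx1 u
  nlinarith

lemma miss_lemma {n : ℕ} (k : ℕ) (θ : ℝ) (hθ : 0 < θ) (hθ1 : θ ≤ 1 / 100)
    (hθk : 20 * θ * (2 * k + 1) ≤ 1 / 8) (hnk : (2 * k + 1 : ℝ) ≤ n / 8)
    (G : SimpleGraph (Fin n)) (hG : IsSpexWheel (2 * k + 1) G) (L R : Finset (Fin n)) (hLR : R = Lᶜ)
    (hL : (L.card : ℝ) ≤ (1 / 2 + θ) * n) (hR : (R.card : ℝ) ≤ (1 / 2 + θ) * n)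
    (hmiss : ∑ u ∈ R, ((L.card : ℝ) - degIn G L u) ≤ θ ^ 2 * n ^ 2)
    (hinner : ∀ v ∈ L, (degIn G L v : ℝ) ≤ θ * n)
    (x : Fin n → ℝ) (hx0 : ∀ v, 0 ≤ x v) (hx1 : ∀ v, x v ≤ 1)
    (hx : ∀ v, mulA G x v = lam1 G * x v)
    (hsum : (1 / 2 - 5 * θ) * n ≤ ∑ u ∈ R, x u) :
    ∀ s ∈ L, (R.card : ℝ) - degIn G R s ≤ 20 * θ * n := by
  classical
  intro s hs
  have hnp : (0 : ℝ) < n := by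
    have : (0 : ℝ) ≤ k := Nat.cast_nonneg _
    linarith
  have hn0 : 0 < n := by exact_mod_cast hnp
  have hLc : (L.card : ℝ) = n - R.card := by
    rw [hLR, card_compl, Nat.cast_sub (by simpa using card_le_univ L)]; simp
  set T := R.filter (fun u => (L.card : ℝ) - degIn G L u ≤ 20 * θ * n) with hT
  set B := R.filter (fun u => ¬ ((L.card : ℝ) - degIn G L u ≤ 20 * θ * n)) with hB
  have hBc : (B.card : ℝ) ≤ θ * n := by
    have h1 : ∑ u ∈ B, (20 * θ * n) ≤ ∑ u ∈ B, ((L.card : ℝ) - degIn G L u) := by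
      refine sum_le_sum fun u hu => ?_
      have := (mem_filter.1 hu).2
      exact (not_le.1 this).le
    have h2 : ∑ u ∈ B, ((L.card : ℝ) - degIn G L u) ≤ ∑ u ∈ R, ((L.card : ℝ) - degIn G L u) := by
      refine sum_le_sum_of_subset_of_nonneg (filter_subset _ _) fun u _ _ => ?_
      have : (degIn G L u : ℝ) ≤ L.card := by exact_mod_cast degIn_le _ _ _
      linarith
    rw [sum_const, nsmul_eq_mul] at h1
    have h3 : (B.card : ℝ) * (20 * θ * n) ≤ (θ * n) * (θ * n) := by nlinarith
    have h4 : 0 < θ * n := by positivity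
    have h5 : (20 * (B.card : ℝ)) * (θ * n) ≤ (θ * n) * (θ * n) := by linarith
    have := le_of_mul_le_mul_right h5 h4
    have : (0 : ℝ) ≤ B.card := Nat.cast_nonneg _
    linarith
  have hsT : s ∉ T := by
    intro h
    have := (mem_filter.1 h).1
    rw [hLR] at this
    simp at this
    exact this hs
  have hfree : WheelFree (2 * k + 1) (replG G s T) := by
    apply replG_free _ _ _ _ hG.1
    intro W hW
    set Bad := W ∪ (W ∩ T).biUnion (fun w => L \ nb G w) with hBad
    have hcard : Bad.card < L.card := by
      have h1 : (Bad.card : ℝ) ≤ (2 * k + 1) + (2 * k + 1) * (20 * θ * n) := by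
        have e1 : (Bad.card : ℝ) ≤ W.card + ∑ w ∈ W ∩ T, ((L \ nb G w).card : ℝ) := by
          have := (card_union_le W ((W ∩ T).biUnion (fun w => L \ nb G w))).trans
            (Nat.add_le_add_left card_biUnion_le _)
          exact_mod_cast this
        have e2 : ∀ w ∈ W ∩ T, ((L \ nb G w).card : ℝ) ≤ 20 * θ * n := by
          intro w hw
          have hw' := (mem_filter.1 (mem_inter.1 hw).2).2
          have : (L \ nb G w).card + degIn G L w = L.card := by
            rw [degIn_eq]; exact card_sdiff_add_card_inter _ _
          have : ((L \ nb G w).card : ℝ) + degIn G L w = L.card := by exact_mod_cast this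
          linarith
        have e3 := sum_le_card_nsmul _ _ _ e2
        rw [nsmul_eq_mul] at e3
        have e4 : ((W ∩ T).card : ℝ) ≤ 2 * k + 1 := by
          exact_mod_cast (card_le_card inter_subset_left).trans hW
        have e5 : (W.card : ℝ) ≤ 2 * k + 1 := by exact_mod_cast hW
        have e6 : 0 ≤ 20 * θ * n := by positivity
        have e7 : ((W ∩ T).card : ℝ) * (20 * θ * n) ≤ (2 * k + 1) * (20 * θ * n) := by gcongr
        linarith
      have h2 : (2 * k + 1 : ℝ) * (20 * θ * n) ≤ 1 / 8 * n := by nlinarith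
      have h3 : (Bad.card : ℝ) < L.card := by
        rw [hLc]
        nlinarith
      exact_mod_cast h3
    obtain ⟨s', hs'L, hs'B⟩ := exists_mem_notMem_of_card_lt_card hcard
    rw [hBad, mem_union, not_or] at hs'B
    refine ⟨s', hs'B.1, fun w hw hwT => ?_⟩
    by_contra hna
    apply hs'B.2
    rw [mem_biUnion]
    refine ⟨w, mem_inter.2 ⟨hw, hwT⟩, mem_sdiff.2 ⟨hs'L, ?_⟩⟩
    rw [mem_nb]
    exact fun h => hna h.symm
  have hspec := replG_spec hn0 G s T _ hG hsT hfree x hx0 hx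
  have h1 := mulA_le G x hx0 hx1 L s
  have h2 : ∑ u ∈ Lᶜ, aa G s u * x u ≤ degIn G R s := by
    rw [← hLR, ← sum_aa]
    refine sum_le_sum fun u _ => ?_
    have := aa_nonneg G s u
    have := hx1 u
    nlinarith
  have h3 : ∑ u ∈ R, x u ≤ ∑ u ∈ T, x u + B.card := by
    rw [← sum_filter_add_sum_filter_not R (fun u => (L.card : ℝ) - degIn G L u ≤ 20 * θ * n)]
    have : ∑ u ∈ B, x u ≤ B.card := by
      have := sum_le_card_nsmul B x 1 (fun u _ => hx1 u)
      simpa using this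
    linarith
  have h4 := hinner s hs
  have : 0 < θ * n := by positivity
  nlinarith

set_option maxHeartbeats 2000000 in
/-- The structure lemma. -/
lemma struct2 (k : ℕ) (hk : 2 ≤ k) (η : ℝ) (hη : 0 < η) (hη1 : η ≤ 1 / (16 * k)) : ∃ N : ℕ, ∀ n : ℕ, N ≤ n →
    ∀ G : SimpleGraph (Fin n), IsSpexWheel (2 * k + 1) G → ∀ L R, IsMaxCut G L R →
      (L.card : ℝ) ≤ (1 / 2 + η) * n ∧ (R.card : ℝ) ≤ (1 / 2 + η) * n ∧
      (∀ s ∈ L, (R.card : ℝ) - degIn G R s ≤ η * n) ∧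
      (∀ s ∈ R, (L.card : ℝ) - degIn G L s ≤ η * n) ∧
      (n : ℝ) / 2 - 1 ≤ lam1 G ∧ lam1 G ≤ (1 / 2 + η) * n ∧
      ∃ x : Fin n → ℝ, (∀ v, 1 - η ≤ x v) ∧ (∀ v, x v ≤ 1) ∧
        (∀ v, mulA G x v = lam1 G * x v) := by
  classical
  set θ := η / 100 with hθ
  have hθ0 : 0 < θ := by positivity
  have hkR : (2 : ℝ) ≤ k := by exact_mod_cast hk
  have hηk : η * k ≤ 1 / 16 := by
    rw [le_div_iff₀ (by positivity)] at hη1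
    linarith
  have hη32 : η ≤ 1 / 32 := by nlinarith
  obtain ⟨N, hN⟩ := struct1 k hk θ hθ0
  obtain ⟨M, hM⟩ := exists_nat_gt (1 / θ)
  refine ⟨N + M + 8 * (2 * k + 1), fun n hn G hG => ?_⟩
  have hnp : (0 : ℝ) < n := by exact_mod_cast (by omega : 0 < n)
  have hn0 : 0 < n := by omega
  have hnM : 1 / θ < n := hM.trans_le (by exact_mod_cast (by omega : M ≤ n))
  rw [div_lt_iff₀ hθ0] at hnM
  have hnk : (2 * k + 1 : ℝ) ≤ n / 8 := by
    have : 8 * (2 * k + 1) ≤ n := by omega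
    have : (8 : ℝ) * (2 * k + 1) ≤ n := by exact_mod_cast this
    linarith
  have hlam := lam_lower hn0 k hk G hG
  obtain ⟨x, hx0, hx1, ⟨z, hz⟩, hx⟩ := perron hn0 G
  have hlz : mulA G x z = lam1 G := by rw [hx, hz, mul_one]
  -- reduce to the case `z ∈ L`
  have main : ∀ L R, IsMaxCut G L R → z ∈ L →
      (L.card : ℝ) ≤ (1 / 2 + η) * n ∧ (R.card : ℝ) ≤ (1 / 2 + η) * n ∧
      (∀ s ∈ L, (R.card : ℝ) - degIn G R s ≤ η * n) ∧
      (∀ s ∈ R, (L.card : ℝ) - degIn G L s ≤ η * n) ∧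
      lam1 G ≤ (1 / 2 + η) * n ∧ (∀ v, 1 - η ≤ x v) := by
    intro L R hLR hzL
    obtain ⟨hL, hR, hm1, hi1⟩ := hN n (by omega) G hG L R hLR
    obtain ⟨-, -, hm2, hi2⟩ := hN n (by omega) G hG R L hLR.symm'
    have hRL : R = Lᶜ := hLR.1
    have hLRc : L = Rᶜ := hLR.symm'.1
    have hup : lam1 G ≤ θ * n + ∑ u ∈ R, x u := by
      rw [← hlz]
      refine (mulA_le G x hx0 hx1 L z).trans ?_
      rw [← hRL]
      refine add_le_add (hi1 z hzL) (sum_le_sum fun u _ => ?_)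
      have := aa_le_one G z u
      have := hx0 u
      nlinarith
    have hsR : (1 / 2 - 2 * θ) * n ≤ ∑ u ∈ R, x u := by linarith
    have hsR' : ∑ u ∈ R, x u ≤ R.card := by
      have := sum_le_card_nsmul R x 1 (fun u _ => hx1 u)
      simpa using this
    have hlamup : lam1 G ≤ (1 / 2 + 2 * θ) * n := by linarith
    have hsL : (1 / 2 - 5 * θ) * n ≤ ∑ u ∈ L, x u := by
      have e1 : lam1 G * ∑ u ∈ R, x u ≤ R.card * (θ * n) + R.card * ∑ u ∈ L, x u := by
        rw [mul_sum]
        have : ∀ w ∈ R, lam1 G * x w ≤ θ * n + ∑ u ∈ L, x u := by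
          intro w hw
          rw [← hx]
          refine (mulA_le G x hx0 hx1 R w).trans ?_
          rw [← hLRc]
          refine add_le_add (hi2 w hw) (sum_le_sum fun u _ => ?_)
          have := aa_le_one G w u
          have := hx0 u
          nlinarith
        have := sum_le_card_nsmul R _ _ this
        rw [nsmul_eq_mul] at this
        linarith
      have hS0 : 0 ≤ ∑ u ∈ L, x u := sum_nonneg fun u _ => hx0 u
      set S := ∑ u ∈ L, x u with hS
      have e2 : ((1 / 2 - θ) * n) * ((1 / 2 - 2 * θ) * n) ≤ ((1 / 2 + θ) * n) * (θ * n + S) := by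
        have a1 : (1 / 2 - θ) * n ≤ lam1 G := by linarith
        calc _ ≤ lam1 G * ∑ u ∈ R, x u := by
              apply mul_le_mul a1 hsR
              · apply mul_nonneg _ hnp.le; linarith
              · linarith
          _ ≤ R.card * (θ * n + S) := by linarith
          _ ≤ _ := by gcongr
      have e3 : (1 / 2 - θ) * ((1 / 2 - 2 * θ) * n) ≤ (1 / 2 + θ) * (θ * n + S) := by
        have : ((1 / 2 - θ) * ((1 / 2 - 2 * θ) * n)) * n ≤ ((1 / 2 + θ) * (θ * n + S)) * n := by linarith
        exact le_of_mul_le_mul_right this hnp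
      by_contra hlt
      push Not at hlt
      have : (1 / 2 + θ) * (θ * n + S) < (1 / 2 + θ) * (θ * n + (1 / 2 - 5 * θ) * n) := by
        gcongr
      nlinarith [mul_pos hθ0 hnp, mul_pos (mul_pos hθ0 hθ0) hnp]
    have hθk : 20 * θ * (2 * k + 1) ≤ 1 / 8 := by nlinarith
    have mL := miss_lemma k θ hθ0 (by linarith) hθk hnk G hG L R hRL hL hR hm2 hi1 x hx0 hx1 hx
      (by nlinarith [mul_pos hθ0 hnp])
    have mR := miss_lemma k θ hθ0 (by linarith) hθk hnk G hG R L hLRc hR hL hm1 hi2 x hx0 hx1 hx hsL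
    have hηn : 0 < η * n := by positivity
    have hθη : θ * n = η * n / 100 := by rw [hθ]; ring
    refine ⟨by nlinarith, by nlinarith, fun s hs => ?_, fun s hs => ?_, by nlinarith, ?_⟩
    · have := mL s hs; nlinarith
    · have := mR s hs; nlinarith
    · -- lower bound on the entries
      have ent : ∀ A : Finset (Fin n), (1 / 2 - 5 * θ) * n ≤ ∑ u ∈ A, x u → ∀ v,
          (A.card : ℝ) - degIn G A v ≤ 20 * θ * n → 1 - η ≤ x v := by
        intro A hA v hv
        have a1 : ∑ u ∈ A, x u - ((A.card : ℝ) - degIn G A v) ≤ mulA G x v := by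
          have b1 : ∑ u ∈ A, aa G v u * x u ≤ mulA G x v := by
            refine sum_le_sum_of_subset_of_nonneg (subset_univ _) fun u _ _ => ?_
            exact mul_nonneg (aa_nonneg _ _ _) (hx0 u)
          have b2 : ∑ u ∈ A, x u ≤ ∑ u ∈ A, (aa G v u * x u + (1 - aa G v u)) := by
            refine sum_le_sum fun u _ => ?_
            have := aa_le_one G v u
            have := hx1 u
            nlinarith
          rw [sum_add_distrib, sum_sub_distrib, sum_aa] at b2
          simp only [sum_const, nsmul_eq_mul, mul_one] at b2
          linarith
        rw [hx] at a1
        by_contra hlt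
        push Not at hlt
        have a2 : lam1 G * x v ≤ (1 / 2 + 2 * θ) * n * (1 - η) := by
          apply mul_le_mul hlamup hlt.le (hx0 v) (by positivity)
        have a3 : (1 / 2 - 25 * θ) * n ≤ (1 / 2 + 2 * θ) * n * (1 - η) := by linarith
        have a4 : (1 / 2 - 25 * θ) ≤ (1 / 2 + 2 * θ) * (1 - η) := by
          have : (1 / 2 - 25 * θ) * n ≤ ((1 / 2 + 2 * θ) * (1 - η)) * n := by linarith
          exact le_of_mul_le_mul_right this hnp
        have : η = 100 * θ := by rw [hθ]; ring
        rw [this] at a4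
        nlinarith
      intro v
      by_cases hv : v ∈ L
      · exact ent R (by nlinarith [mul_pos hθ0 hnp]) v (mL v hv)
      · exact ent L hsL v (mR v (by rw [hRL]; simpa using hv))
  intro L R hLR
  by_cases hzL : z ∈ L
  · obtain ⟨a, b, c, d, e, f⟩ := main L R hLR hzL
    exact ⟨a, b, c, d, hlam, e, x, f, hx1, hx⟩
  · obtain ⟨a, b, c, d, e, f⟩ := main R L hLR.symm' (by rw [hLR.1]; simpa using hzL)
    exact ⟨b, a, d, c, hlam, e, x, f, hx1, hx⟩

open Finset

open Classical in
/-- degree, as a sum -/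
noncomputable def dg {V : Type} [Fintype V] (H : SimpleGraph V) (v : V) : ℕ :=
  ∑ u, if H.Adj v u then 1 else 0

open Classical in
lemma dg_card {V : Type} [Fintype V] (H : SimpleGraph V) (v : V) :
    dg H v = (univ.filter fun u => H.Adj v u).card := by
  unfold dg; rw [Finset.card_filter]

open Classical in
/-- existence of a graph with small components and degree deficiency `D`. -/
def GoodG (k D l : ℕ) : Prop :=
  ∃ (V : Type) (_ : Fintype V) (H : SimpleGraph V) (c : V → ℕ), Fintype.card V = l ∧
    (∀ v, dg H v ≤ k - 1) ∧ ∑ v, (k - 1 - dg H v) = D ∧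
    (∀ u v, H.Adj u v → c u = c v) ∧ ∀ i, (∑ v, if c v = i then 1 else 0) ≤ 2 * k - 2

lemma GoodG.zero (k : ℕ) : GoodG k 0 0 := by
  refine ⟨Empty, inferInstance, ⊥, fun _ => 0, by simp, ?_, ?_, ?_, ?_⟩ <;> simp

lemma GoodG.add {k D1 D2 l1 l2 : ℕ} (h1 : GoodG k D1 l1) (h2 : GoodG k D2 l2) :
    GoodG k (D1 + D2) (l1 + l2) := by
  classical
  obtain ⟨V1, i1, H1, c1, a1, b1, d1, e1, f1⟩ := h1
  obtain ⟨V2, i2, H2, c2, a2, b2, d2, e2, f2⟩ := h2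
  have dl : ∀ v, dg (H1 ⊕g H2) (Sum.inl v) = dg H1 v := by
    intro v; unfold dg; rw [Fintype.sum_sum_type]; simp
  have dr : ∀ v, dg (H1 ⊕g H2) (Sum.inr v) = dg H2 v := by
    intro v; unfold dg; rw [Fintype.sum_sum_type]; simp
  refine ⟨V1 ⊕ V2, inferInstance, H1 ⊕g H2, Sum.elim (fun v => 2 * c1 v) (fun v => 2 * c2 v + 1),
    by simp [a1, a2], ?_, ?_, ?_, ?_⟩
  · rintro (v | v)
    · rw [dl]; exact b1 v
    · rw [dr]; exact b2 v
  · rw [Fintype.sum_sum_type]; simp only [dl, dr, d1, d2]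
  · rintro (u | u) (v | v) h
    · simp at h; simp [e1 _ _ h]
    · simp at h
    · simp at h
    · simp at h; simp [e2 _ _ h]
  · intro i
    rw [Fintype.sum_sum_type]
    simp only [Sum.elim_inl, Sum.elim_inr]
    rcases Nat.even_or_odd' i with ⟨j, rfl | rfl⟩
    · have : ∀ v, ¬ (2 * c2 v + 1 = 2 * j) := fun v => by omega
      simp only [this, if_false, sum_const_zero, add_zero]
      have e : ∀ v, (2 * c1 v = 2 * j) = (c1 v = j) := fun v => propext (by omega)
      simp only [e]
      convert f1 j
    · have : ∀ v, ¬ (2 * c1 v = 2 * j + 1) := fun v => by omega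
      simp only [this, if_false, sum_const_zero, zero_add]
      have e : ∀ v, (2 * c2 v + 1 = 2 * j + 1) = (c2 v = j) := fun v => propext (by omega)
      simp only [e]
      convert f2 j

lemma GoodG.mul {k l : ℕ} (h : GoodG k 0 l) (a : ℕ) : GoodG k 0 (a * l) := by
  induction a with
  | zero => simpa using GoodG.zero k
  | succ a ih => rw [add_mul, one_mul]; exact GoodG.add (D1 := 0) (D2 := 0) ih h

lemma GoodG.complete (k : ℕ) (hk : 3 ≤ k) : GoodG k 0 k := by
  classical
  have hd : ∀ v, dg (⊤ : SimpleGraph (Fin k)) v = k - 1 := by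
    intro v
    have h : k - 1 = (univ.erase v).card := by
      rw [card_erase_of_mem (mem_univ _)]; simp
    rw [dg_card, h]
    congr 1
    ext u; simp [eq_comm]
  refine ⟨Fin k, inferInstance, ⊤, fun _ => 0, by simp, ?_, ?_, ?_, ?_⟩
  · intro v; rw [hd]
  · simp [hd]
  · intros; rfl
  · intro i
    refine (sum_le_sum (g := fun _ => 1) fun v _ => by split_ifs <;> omega).trans ?_
    simp; omega

lemma GoodG.bip (k : ℕ) (hk : 3 ≤ k) : GoodG k 0 (2 * k - 2) := by
  classical
  have hd : ∀ v, dg (completeBipartiteGraph (Fin (k - 1)) (Fin (k - 1))) v = k - 1 := by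
    rintro (v | v) <;> unfold dg <;> rw [Fintype.sum_sum_type] <;> simp
  refine ⟨Fin (k - 1) ⊕ Fin (k - 1), inferInstance, completeBipartiteGraph _ _, fun _ => 0,
    by simp; omega, ?_, ?_, ?_, ?_⟩
  · intro v; rw [hd]
  · simp [hd]
  · intros; rfl
  · intro i
    refine (sum_le_sum (g := fun _ => 1) fun v _ => by split_ifs <;> omega).trans ?_
    simp; omega

def nearG (k : ℕ) : SimpleGraph (Fin (k + 1)) where
  Adj u v := u ≠ v ∧ ¬ (u.val / 2 = v.val / 2) ∧ ¬ (u.val = 0 ∧ v.val = k) ∧ ¬ (v.val = 0 ∧ u.val = k)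
  symm := by
    constructor
    intro a b h
    exact ⟨h.1.symm, fun e => h.2.1 e.symm, h.2.2.2, h.2.2.1⟩
  loopless := by
    constructor
    intro a h
    exact h.1 rfl

lemma GoodG.near (k : ℕ) (hk : 3 ≤ k) (he : Even k) : GoodG k 1 (k + 1) := by
  classical
  obtain ⟨m, hm⟩ := he
  have hd : ∀ v, dg (nearG k) v = if v = 0 then k - 2 else k - 1 := by
    intro v
    rw [dg_card]
    have hv := v.2
    split_ifs with h0
    · subst h0
      have : (univ.filter fun u => (nearG k).Adj 0 u)
          = univ \ {0, ⟨1, by omega⟩, ⟨k, by omega⟩} := by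
        ext u
        have hu := u.2
        simp only [nearG, mem_filter, mem_univ, true_and, mem_sdiff, mem_insert, mem_singleton,
          Fin.ext_iff, Fin.val_zero, ne_eq]
        omega
      have h3 : ({0, ⟨1, by omega⟩, ⟨k, by omega⟩} : Finset (Fin (k + 1))).card = 3 := by
        rw [card_eq_three]
        refine ⟨_, _, _, ?_, ?_, ?_, rfl⟩ <;> simp only [ne_eq, Fin.ext_iff, Fin.val_zero] <;> omega
      rw [this, card_sdiff_of_subset (subset_univ _), h3, card_univ, Fintype.card_fin]
      omega
    · have h0' : v.val ≠ 0 := fun h => h0 (Fin.ext h)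
      have : (univ.filter fun u => (nearG k).Adj v u)
          = univ \ {v, ⟨if v.val = k then 0 else if v.val % 2 = 0 then v.val + 1 else v.val - 1, by
            split_ifs <;> omega⟩} := by
        ext u
        have hu := u.2
        simp only [nearG, mem_filter, mem_univ, true_and, mem_sdiff, mem_insert, mem_singleton,
          Fin.ext_iff, ne_eq]
        split_ifs <;> omega
      rw [this, card_sdiff_of_subset (subset_univ _), card_pair]
      · simp
      · simp only [ne_eq, Fin.ext_iff]
        split_ifs <;> omega
  refine ⟨Fin (k + 1), inferInstance, nearG k, fun _ => 0, by simp, ?_, ?_, ?_, ?_⟩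
  · intro v; rw [hd]; split_ifs <;> omega
  · simp only [hd]
    have : ∀ v : Fin (k + 1), (k - 1 - if v = 0 then k - 2 else k - 1) = if v = 0 then 1 else 0 := by
      intro v; split_ifs <;> omega
    simp only [this]; simp
  · intros; rfl
  · intro i
    refine (sum_le_sum (g := fun _ => 1) fun v _ => by split_ifs <;> omega).trans ?_
    simp; omega

lemma GoodG.reg (k : ℕ) (hk : 3 ≤ k) (l : ℕ) (hl : 2 * k * k ≤ l) (he : Even ((k - 1) * l)) :
    GoodG k 0 l := by
  have key : ∃ a b, l = a * k + b * (2 * k - 2) := by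
    have hr : l % k < k := Nat.mod_lt _ (by omega)
    have hdm := Nat.div_add_mod l k
    obtain ⟨b, hb, j, hj⟩ : ∃ b, b ≤ k ∧ ∃ j, 1 ≤ j ∧ l % k + 2 * b = j * k := by
      by_cases hp : (k - l % k) % 2 = 0
      · exact ⟨(k - l % k) / 2, by omega, 1, le_refl _, by omega⟩
      · have hlp : (2 * k - l % k) % 2 = 0 := by
          rcases Nat.even_or_odd k with hke | hko
          · have h1 : Even l := by
              rcases Nat.even_mul.1 he with h | h
              · exfalso
                obtain ⟨a, ha⟩ := h
                obtain ⟨b, hb⟩ := hke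
                omega
              · exact h
            have h2 : Even (l % k) := by
              obtain ⟨a, ha⟩ := h1
              obtain ⟨b, hb⟩ := hke
              have h3 : k * (l / k) = 2 * (b * (l / k)) := by rw [hb]; ring
              rw [Nat.even_iff]; omega
            obtain ⟨a, ha⟩ := h2
            omega
          · obtain ⟨b, hb⟩ := hko
            omega
        exact ⟨(2 * k - l % k) / 2, by omega, 2, by omega, by omega⟩
    -- l = k * (l/k) + r, with r = j k - 2 b
    have hq : 2 * k ≤ l / k := by
      rw [Nat.le_div_iff_mul_le (by omega)]; exact hl
    refine ⟨l / k + j - 2 * b, b, ?_⟩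
    have h5 : 2 * b ≤ l / k + j := by linarith only [hb, hq, hj.1]
    have h6 : 2 ≤ 2 * k := by omega
    generalize l / k = q at *
    generalize l % k = r at *
    clear hl he hr hq hb
    zify [h5, h6]
    zify at hdm hj
    linear_combination -hdm + hj.2
  obtain ⟨a, b, hab⟩ := key
  rw [hab]
  exact GoodG.add (D1 := 0) (D2 := 0) ((GoodG.complete k hk).mul a) ((GoodG.bip k hk).mul b)

lemma GoodG.all (k : ℕ) (hk : 3 ≤ k) (l : ℕ) (hl : 2 * k * k + k + 1 ≤ l) :
    GoodG k (((k - 1) * l) % 2) l := by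
  rcases Nat.even_or_odd ((k - 1) * l) with h | h
  · rw [Nat.even_iff.1 h]
    exact GoodG.reg k hk l (by omega) h
  · rw [Nat.odd_iff.1 h]
    rw [Nat.odd_mul] at h
    obtain ⟨⟨a, ha⟩, ⟨b, hb⟩⟩ := h
    have h1 := GoodG.reg k hk (l - (k + 1)) (by omega) (by
      rw [Nat.even_mul]; right; rw [Nat.even_iff]; omega)
    have h2 := GoodG.near k hk (by rw [Nat.even_iff]; omega)
    have := h1.add h2
    rwa [Nat.sub_add_cancel (by omega)] at this

lemma exists_H (k : ℕ) (hk : 3 ≤ k) {n : ℕ} (L : Finset (Fin n)) (hL : 2 * k * k + k + 1 ≤ L.card) :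
    ∃ (H : SimpleGraph (Fin n)) (c : Fin n → ℕ),
      (∀ u v, H.Adj u v → u ∈ L ∧ v ∈ L ∧ c u = c v) ∧
      (∀ v ∈ L, degIn H L v ≤ k - 1) ∧
      (∑ v ∈ L, (k - 1 - degIn H L v) = ((k - 1) * L.card) % 2) ∧
      ∀ i, (L.filter fun v => c v = i).card ≤ 2 * k - 2 := by
  classical
  obtain ⟨V, iV, H, c, a, b, d, e, f⟩ := GoodG.all k hk L.card hL
  have hcard : Fintype.card L = Fintype.card V := by rw [a]; simp
  let φ : L ≃ V := Fintype.equivOfCardEq hcard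
  let H' : SimpleGraph (Fin n) :=
    { Adj := fun u v => ∃ (hu : u ∈ L) (hv : v ∈ L), H.Adj (φ ⟨u, hu⟩) (φ ⟨v, hv⟩)
      symm := by
        constructor
        rintro u v ⟨hu, hv, h⟩
        exact ⟨hv, hu, h.symm⟩
      loopless := by
        constructor
        rintro u ⟨hu, hv, h⟩
        exact H.loopless.irrefl _ h }
  have hdeg : ∀ v (hv : v ∈ L), degIn H' L v = dg H (φ ⟨v, hv⟩) := by
    intro v hv
    unfold degIn dg
    rw [card_filter, ← sum_coe_sort, ← Equiv.sum_comp φ]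
    refine sum_congr rfl fun u _ => ?_
    have : H'.Adj v u ↔ H.Adj (φ ⟨v, hv⟩) (φ u) := by
      constructor
      · rintro ⟨_, _, h⟩; exact h
      · intro h; exact ⟨hv, u.2, h⟩
    simp only [this]
  refine ⟨H', fun u => if hu : u ∈ L then c (φ ⟨u, hu⟩) else 0, ?_, ?_, ?_, ?_⟩
  · rintro u v ⟨hu, hv, h⟩
    exact ⟨hu, hv, by simp only [hu, hv, dif_pos]; exact e _ _ h⟩
  · intro v hv
    rw [hdeg v hv]; exact b _
  · rw [← d, ← sum_coe_sort, ← Equiv.sum_comp φ]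
    exact sum_congr rfl fun u _ => by rw [hdeg _ u.2]
  · intro i
    refine le_trans (le_of_eq ?_) (f i)
    rw [card_filter, ← sum_coe_sort, ← Equiv.sum_comp φ]
    exact sum_congr rfl fun u _ => by simp

open Finset

/-- the comparison graph. -/
def joinG {n : ℕ} (L : Finset (Fin n)) (H : SimpleGraph (Fin n)) (a b : Fin n) (hab : a ≠ b) :
    SimpleGraph (Fin n) where
  Adj u v := (u ∈ L ∧ v ∉ L) ∨ (u ∉ L ∧ v ∈ L) ∨ H.Adj u v ∨ (u = a ∧ v = b) ∨ (u = b ∧ v = a)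
  symm := by
    constructor
    intro u v h
    have : H.Adj u v → H.Adj v u := fun h => h.symm
    tauto
  loopless := by
    constructor
    rintro u (h | h | h | h | h)
    · exact h.2 h.1
    · exact h.1 h.2
    · exact H.loopless.irrefl _ h
    · exact hab (h.1.symm.trans h.2)
    · exact hab (h.2.symm.trans h.1)

lemma mod_succ_eq {m i : ℕ} (hm : 0 < m) :
    ((i % m + 1 < m) ∧ (i + 1) % m = i % m + 1) ∨ (i % m = m - 1 ∧ (i + 1) % m = 0) := by
  have h1 := Nat.mod_lt i hm
  rw [Nat.add_mod i 1 m]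
  rcases Nat.lt_or_ge (i % m + 1) m with h | h
  · left
    refine ⟨h, ?_⟩
    rw [Nat.mod_eq_of_lt (show 1 < m by omega), Nat.mod_eq_of_lt h]
  · right
    refine ⟨by omega, ?_⟩
    rcases Nat.lt_or_ge 1 m with h2 | h2
    · rw [Nat.mod_eq_of_lt h2, show i % m + 1 = m by omega, Nat.mod_self]
    · have : m = 1 := by omega
      subst this; exact Nat.mod_one _

lemma joinG_free {n : ℕ} (k : ℕ) (hk : 3 ≤ k) (L : Finset (Fin n)) (H : SimpleGraph (Fin n))
    (c : Fin n → ℕ) (a b : Fin n) (hab : a ≠ b) (haL : a ∉ L) (hbL : b ∉ L)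
    (hH : ∀ u v, H.Adj u v → u ∈ L ∧ v ∈ L ∧ c u = c v)
    (hdeg : ∀ v ∈ L, degIn H L v ≤ k - 1)
    (hc : ∀ i, (L.filter fun v => c v = i).card ≤ 2 * k - 2) :
    WheelFree (2 * k + 1) (joinG L H a b hab) := by
  classical
  intro hcc
  obtain ⟨h, g0, ginj, hg, hgg, hgl⟩ := cycle_of_wheel _ (2 * k) (by omega) hcc
  have hm : 0 < 2 * k := by omega
  obtain ⟨m, hmk⟩ : ∃ m, m = 2 * k := ⟨_, rfl⟩
  rw [← hmk] at ginj hg hgg hgl hm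
  let g : ℕ → Fin n := fun i => g0 (i % m)
  have A1 : ∀ i, (joinG L H a b hab).Adj h (g i) := fun i => hg _ (Nat.mod_lt _ hm)
  have A2 : ∀ i, (joinG L H a b hab).Adj (g i) (g (i + 1)) := by
    intro i
    show (joinG L H a b hab).Adj (g0 (i % m)) (g0 ((i + 1) % m))
    rcases mod_succ_eq (i := i) hm with ⟨h1, h2⟩ | ⟨h1, h2⟩
    · rw [h2]; exact hgg _ h1
    · rw [h2, h1]; exact hgl
  have A3 : ∀ i j, g i = g j → i % m = j % m := by
    intro i j hij
    exact ginj _ (Nat.mod_lt _ hm) _ (Nat.mod_lt _ hm) hij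
  have A4 : ∀ i j, i % m = j % m → g i = g j := by
    intro i j hij
    show g0 (i % m) = g0 (j % m)
    rw [hij]
  have J1 : ∀ u v, (joinG L H a b hab).Adj u v → u ∈ L → v ∈ L → H.Adj u v := by
    rintro u v (h | h | h | h | h) hu hv
    · exact absurd hv h.2
    · exact absurd hu h.1
    · exact h
    · exact absurd (h.1 ▸ hu) haL
    · exact absurd (h.1 ▸ hu) hbL
  have J2 : ∀ u v, (joinG L H a b hab).Adj u v → u ∉ L → v ∉ L →
      (u = a ∧ v = b) ∨ (u = b ∧ v = a) := by
    rintro u v (h | h | h | h) hu hv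
    · exact absurd h.1 hu
    · exact absurd h.2 hv
    · exact absurd (hH u v h).1 hu
    · exact h
  by_cases hL : h ∈ L
  · -- hub in L
    let S := (range m).filter fun i => g i ∈ L
    let T := (range m).filter fun i => g i ∉ L ∧ g (i + 1) ∉ L
    let U := (range m).filter fun i => g i ∉ L
    have hS : S.card ≤ k - 1 := by
      refine le_trans ?_ (hdeg h hL)
      rw [degIn_eq]
      refine card_le_card_of_injOn g ?_ ?_
      · intro i hi
        have hi' : g i ∈ L := (mem_filter.1 hi).2
        simp only [coe_inter, Set.mem_inter_iff, mem_coe, mem_nb]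
        exact ⟨hi', J1 _ _ (A1 i) hL hi'⟩
      · intro i hi j hj hij
        have hi' := mem_range.1 (mem_filter.1 hi).1
        have hj' := mem_range.1 (mem_filter.1 hj).1
        have := A3 _ _ hij
        rwa [Nat.mod_eq_of_lt hi', Nat.mod_eq_of_lt hj'] at this
    have hSU : S.card + U.card = m := by
      have := card_filter_add_card_filter_not (s := range m) (fun i => g i ∈ L)
      rw [card_range] at this
      exact this
    have hUT : (U \ T).card ≤ S.card := by
      refine card_le_card_of_injOn (fun i => (i + 1) % m) ?_ ?_
      · intro i hi
        simp only [coe_sdiff, Set.mem_sdiff, mem_coe, U, T, S, mem_filter, mem_range] at hi ⊢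
        refine ⟨Nat.mod_lt _ hm, ?_⟩
        have e : g ((i + 1) % m) = g (i + 1) := A4 _ _ (Nat.mod_mod _ _)
        rw [e]
        by_contra hcon
        exact hi.2 ⟨hi.1.1, hi.1.2, hcon⟩
      · intro i hi j hj hij
        have hi' := mem_range.1 (mem_filter.1 (mem_sdiff.1 hi).1).1
        have hj' := mem_range.1 (mem_filter.1 (mem_sdiff.1 hj).1).1
        have hij : (i + 1) % m = (j + 1) % m := hij
        have h1 := mod_succ_eq (i := i) hm
        have h2 := mod_succ_eq (i := j) hm
        rw [Nat.mod_eq_of_lt hi'] at h1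
        rw [Nat.mod_eq_of_lt hj'] at h2
        omega
    have hTU : T ⊆ U := by
      intro i hi
      have := mem_filter.1 hi
      exact mem_filter.2 ⟨this.1, this.2.1⟩
    have hT : 1 < T.card := by
      have := card_sdiff_add_card_eq_card hTU
      omega
    obtain ⟨i, hi, j, hj, hij⟩ := one_lt_card.1 hT
    obtain ⟨hi1, hi2, hi3⟩ := mem_filter.1 hi
    obtain ⟨hj1, hj2, hj3⟩ := mem_filter.1 hj
    have hi' := mem_range.1 hi1
    have hj' := mem_range.1 hj1
    have e1 := J2 _ _ (A2 i) hi2 hi3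
    have e2 := J2 _ _ (A2 j) hj2 hj3
    have ne : g i ≠ g j := by
      intro h
      have := A3 _ _ h
      rw [Nat.mod_eq_of_lt hi', Nat.mod_eq_of_lt hj'] at this
      exact hij this
    have e3 : g j = g (i + 1) ∧ g (j + 1) = g i := by
      rcases e1 with ⟨p, q⟩ | ⟨p, q⟩ <;> rcases e2 with ⟨r, s⟩ | ⟨r, s⟩
      · exact absurd (p.trans r.symm) ne
      · exact ⟨r.trans q.symm, s.trans p.symm⟩
      · exact ⟨r.trans q.symm, s.trans p.symm⟩
      · exact absurd (p.trans r.symm) ne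
    have f1 := A3 _ _ e3.1
    have f2 := A3 _ _ e3.2
    have h1 := mod_succ_eq (i := i) hm
    have h2 := mod_succ_eq (i := j) hm
    rw [Nat.mod_eq_of_lt hi'] at h1 f2
    rw [Nat.mod_eq_of_lt hj'] at h2 f1
    omega
  · -- hub in R
    obtain ⟨i0, hi0⟩ : ∃ i0, ∀ i, i % m ≠ i0 % m → g i ∈ L := by
      by_cases hex : ∃ i0, g i0 ∉ L
      · obtain ⟨i0, hi0⟩ := hex
        refine ⟨i0, fun i hi => ?_⟩
        by_contra hcon
        have e1 := J2 _ _ (A1 i0) hL hi0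
        have e2 := J2 _ _ (A1 i) hL hcon
        apply hi
        apply A3
        rcases e1 with ⟨p, q⟩ | ⟨p, q⟩ <;> rcases e2 with ⟨r, s⟩ | ⟨r, s⟩
        · rw [s, q]
        · exact absurd (p.symm.trans r) hab
        · exact absurd (r.symm.trans p) hab
        · rw [s, q]
      · push Not at hex
        exact ⟨0, fun i _ => hex i⟩
    have hne : ∀ j, j < m - 1 → (i0 + 1 + j) % m ≠ i0 % m := by
      intro j hj hh
      have : (i0 + (1 + j)) ≡ i0 + 0 [MOD m] := by
        show (i0 + (1 + j)) % m = (i0 + 0) % m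
        rw [← add_assoc]; exact hh
      have := Nat.ModEq.add_left_cancel' i0 this
      have h3 : (1 + j) % m = 0 % m := this
      rw [Nat.mod_eq_of_lt (by omega), Nat.zero_mod] at h3
      omega
    have hinL : ∀ j, j < m - 1 → g (i0 + 1 + j) ∈ L := fun j hj => hi0 _ (hne j hj)
    have hcol : ∀ j, j < m - 1 → c (g (i0 + 1 + j)) = c (g (i0 + 1)) := by
      intro j
      induction j with
      | zero => intro _; rfl
      | succ j ih =>
        intro hj
        rw [← ih (by omega)]
        have := J1 _ _ (A2 (i0 + 1 + j)) (hinL j (by omega)) (hinL (j + 1) hj)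
        exact (hH _ _ this).2.2.symm
    have : (range (m - 1)).card ≤ (L.filter fun v => c v = c (g (i0 + 1))).card := by
      refine card_le_card_of_injOn (fun j => g (i0 + 1 + j)) ?_ ?_
      · intro j hj
        have hj' : j < m - 1 := mem_range.1 hj
        simp only [coe_filter, Set.mem_ofPred_eq]
        exact ⟨hinL j hj', hcol j hj'⟩
      · intro i hi j hj hij
        have hi' : i < m - 1 := mem_range.1 hi
        have hj' : j < m - 1 := mem_range.1 hj
        have h1 : i0 + 1 + i ≡ i0 + 1 + j [MOD m] := A3 _ _ hij
        have h2 : i % m = j % m := Nat.ModEq.add_left_cancel' _ h1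
        rwa [Nat.mod_eq_of_lt (by omega), Nat.mod_eq_of_lt (by omega)] at h2
    rw [card_range] at this
    have := hc (c (g (i0 + 1)))
    omega

open Finset

section
variable {n : ℕ} (k : ℕ) (L : Finset (Fin n)) (H : SimpleGraph (Fin n))
    (a b : Fin n) (hab : a ≠ b)

lemma join_LR {u v : Fin n} (hu : u ∈ L) (hv : v ∉ L) : aa (joinG L H a b hab) u v = 1 :=
  aa_of_adj (Or.inl ⟨hu, hv⟩)

lemma join_RL {u v : Fin n} (hu : u ∉ L) (hv : v ∈ L) : aa (joinG L H a b hab) u v = 1 :=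
  aa_of_adj (Or.inr (Or.inl ⟨hu, hv⟩))

lemma join_LL (haL : a ∉ L) (hbL : b ∉ L) {u v : Fin n} (hu : u ∈ L) (hv : v ∈ L) :
    aa (joinG L H a b hab) u v = aa H u v := by
  by_cases h : H.Adj u v
  · rw [aa_of_adj h]; exact aa_of_adj (Or.inr (Or.inr (Or.inl h)))
  · rw [aa_of_not h]
    refine aa_of_not ?_
    rintro (h' | h' | h' | h' | h')
    · exact h'.2 hv
    · exact h'.1 hu
    · exact h h'
    · exact haL (h'.1 ▸ hu)
    · exact hbL (h'.1 ▸ hu)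

lemma join_RR (hH : ∀ u v, H.Adj u v → u ∈ L) {u v : Fin n} (hu : u ∉ L) (hv : v ∉ L) :
    (joinG L H a b hab).Adj u v ↔ (u = a ∧ v = b) ∨ (u = b ∧ v = a) := by
  constructor
  · rintro (h' | h' | h' | h')
    · exact absurd h'.1 hu
    · exact absurd h'.2 hv
    · exact absurd (hH u v h') hu
    · exact h'
  · intro h
    exact Or.inr (Or.inr (Or.inr h))

lemma join_degR (hH : ∀ u v, H.Adj u v → u ∈ L) {w : Fin n} (hw : w ∉ L) :
    degIn (joinG L H a b hab) Lᶜ w ≤ 1 := by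
  rw [degIn_eq, card_le_one]
  intro u hu v hv
  simp only [mem_inter, mem_compl, mem_nb] at hu hv
  have h1 := (join_RR L H a b hab hH hw hu.1).1 hu.2
  have h2 := (join_RR L H a b hab hH hw hv.1).1 hv.2
  rcases h1 with ⟨p, q⟩ | ⟨p, q⟩ <;> rcases h2 with ⟨r, s⟩ | ⟨r, s⟩
  · rw [q, s]
  · exact absurd (p.symm.trans r) hab
  · exact absurd (r.symm.trans p) hab
  · rw [q, s]

lemma mulA_split (G : SimpleGraph (Fin n)) (x : Fin n → ℝ) (v : Fin n) :
    mulA G x v = ∑ u ∈ L, aa G v u * x u + ∑ u ∈ Lᶜ, aa G v u * x u := by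
  rw [sum_add_sum_compl]; rfl

lemma join_lam_lower (hn : 0 < n) :
    2 * (L.card : ℝ) * (Lᶜ.card : ℝ) ≤ lam1 (joinG L H a b hab) * n := by
  have h := rayleigh hn (joinG L H a b hab) (fun _ => 1)
  simp only [one_pow, sum_const, card_univ, Fintype.card_fin, nsmul_eq_mul, mul_one] at h
  refine le_trans ?_ h
  unfold qA
  rw [← sum_add_sum_compl L]
  have h1 : ∀ v ∈ L, (Lᶜ.card : ℝ) ≤ 1 * mulA (joinG L H a b hab) (fun _ => 1) v := by
    intro v hv
    rw [one_mul, mulA_split L]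
    have : ∑ u ∈ Lᶜ, aa (joinG L H a b hab) v u * 1 = Lᶜ.card := by
      rw [sum_congr rfl (fun u hu => by
        rw [join_LR L H a b hab hv (mem_compl.1 hu), mul_one])]
      simp
    rw [this]
    have : 0 ≤ ∑ u ∈ L, aa (joinG L H a b hab) v u * 1 :=
      sum_nonneg fun u _ => by rw [mul_one]; exact aa_nonneg _ _ _
    linarith
  have h2 : ∀ v ∈ Lᶜ, (L.card : ℝ) ≤ 1 * mulA (joinG L H a b hab) (fun _ => 1) v := by
    intro v hv
    rw [one_mul, mulA_split L]
    have : ∑ u ∈ L, aa (joinG L H a b hab) v u * 1 = L.card := by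
      rw [sum_congr rfl (fun u hu => by
        rw [join_RL L H a b hab (mem_compl.1 hv) hu, mul_one])]
      simp
    rw [this]
    have : 0 ≤ ∑ u ∈ Lᶜ, aa (joinG L H a b hab) v u * 1 :=
      sum_nonneg fun u _ => by rw [mul_one]; exact aa_nonneg _ _ _
    linarith
  have h3 := card_nsmul_le_sum L _ _ h1
  have h4 := card_nsmul_le_sum Lᶜ _ _ h2
  rw [nsmul_eq_mul] at h3 h4
  nlinarith

/-- Perron vector of the comparison graph. -/
lemma join_perron (hn : 0 < n) (hk : 3 ≤ k) (haL : a ∉ L) (hbL : b ∉ L)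
    (hH : ∀ u v, H.Adj u v → u ∈ L)
    (hdeg : ∀ v ∈ L, degIn H L v ≤ k - 1)
    (hsum : ∑ v ∈ L, (k - 1 - degIn H L v) ≤ 1)
    (hl1 : 11 * (k : ℝ) ≤ lam1 (joinG L H a b hab))
    (hl2 : (L.card : ℝ) ≤ 2 * (lam1 (joinG L H a b hab) - 1))
    (hl3 : lam1 (joinG L H a b hab) ≤ 2 * (L.card : ℝ) - 1) :
    ∃ y : Fin n → ℝ, (∀ v, 0 ≤ y v) ∧
      (∀ v, mulA (joinG L H a b hab) y v = lam1 (joinG L H a b hab) * y v) ∧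
      (∀ v ∈ L, y v ≤ 1) ∧ ((k : ℝ) - 1) * ∑ v ∈ L, (1 - y v) ≤ 1 / 10 ∧
      ∀ v ∉ L, 1 / 2 ≤ y v ∧ y v ≤ 2 := by
  obtain ⟨y0, y00, -, ⟨z, hz⟩, hy0⟩ := perron hn (joinG L H a b hab)
  generalize lam1 (joinG L H a b hab) = lam at *
  have hk3 : (3 : ℝ) ≤ k := by exact_mod_cast hk
  have hk1 : ((k - 1 : ℕ) : ℝ) = (k : ℝ) - 1 := by
    rw [Nat.cast_sub (by omega)]; simp
  have hdegR : ∀ v ∈ L, (degIn H L v : ℝ) ≤ (k : ℝ) - 1 := by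
    intro v hv
    rw [← hk1]; exact_mod_cast hdeg v hv
  have hLpos : 0 < L.card := by
    have : (0 : ℝ) < L.card := by linarith
    exact_mod_cast this
  have eqL : ∀ (y : Fin n → ℝ), (∀ v, mulA (joinG L H a b hab) y v = lam * y v) → ∀ u ∈ L,
      lam * y u = ∑ v ∈ L, aa H u v * y v + ∑ v ∈ Lᶜ, y v := by
    intro y hy u hu
    rw [← hy u, mulA_split L]
    congr 1
    · exact sum_congr rfl fun v hv => by rw [join_LL L H a b hab haL hbL hu hv]
    · exact sum_congr rfl fun v hv => by rw [join_LR L H a b hab hu (mem_compl.1 hv), one_mul]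
  have eqR : ∀ (y : Fin n → ℝ), (∀ v, mulA (joinG L H a b hab) y v = lam * y v) → ∀ w ∉ L,
      lam * y w = ∑ v ∈ L, y v + ∑ v ∈ Lᶜ, aa (joinG L H a b hab) w v * y v := by
    intro y hy u hu
    rw [← hy u, mulA_split L]
    congr 1
    exact sum_congr rfl fun v hv => by rw [join_RL L H a b hab hu hv, one_mul]
  have hpos : 0 < lam - (k - 1) := by linarith
  obtain ⟨s0, hs0⟩ : ∃ s0, s0 = ∑ v ∈ Lᶜ, y0 v := ⟨_, rfl⟩
  have hbd : ∀ u ∈ L, y0 u ≤ s0 / (lam - (k - 1)) := by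
    obtain ⟨u0, hu0, hmax⟩ := exists_max_image L y0 (card_pos.1 hLpos)
    intro u hu
    refine (hmax u hu).trans ?_
    rw [le_div_iff₀ hpos]
    have h1 := eqL y0 hy0 u0 hu0
    have h2 : ∑ v ∈ L, aa H u0 v * y0 v ≤ ((k : ℝ) - 1) * y0 u0 := by
      calc ∑ v ∈ L, aa H u0 v * y0 v ≤ ∑ v ∈ L, aa H u0 v * y0 u0 :=
            sum_le_sum fun v hv => mul_le_mul_of_nonneg_left (hmax v hv) (aa_nonneg _ _ _)
        _ = (degIn H L u0 : ℝ) * y0 u0 := by rw [← sum_mul, sum_aa]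
        _ ≤ _ := mul_le_mul_of_nonneg_right (hdegR _ hu0) (y00 _)
    rw [← hs0] at h1
    linarith
  have hs0n : 0 ≤ s0 := by rw [hs0]; exact sum_nonneg fun v _ => y00 v
  have hs0p : 0 < s0 := by
    rcases hs0n.lt_or_eq with h | h
    · exact h
    exfalso
    by_cases hzL : z ∈ L
    · have := hbd z hzL
      rw [← h, hz, zero_div] at this
      linarith
    · have h3 : y0 z ≤ s0 := by
        rw [hs0]
        exact single_le_sum (f := y0) (fun v _ => y00 v) (mem_compl.2 hzL)
      rw [← h, hz] at h3
      linarith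
  obtain ⟨β, hβ⟩ : ∃ β, β = s0 / (lam - (k - 1)) := ⟨_, rfl⟩
  have hβp : 0 < β := by rw [hβ]; positivity
  rw [← hβ] at hbd
  have hy : ∀ v, mulA (joinG L H a b hab) (fun v => y0 v / β) v = lam * (y0 v / β) := by
    intro v
    rw [← mul_div_assoc, ← hy0 v]
    unfold mulA
    rw [sum_div]
    exact sum_congr rfl fun u _ => by rw [mul_div_assoc]
  obtain ⟨y, hyd⟩ : ∃ y : Fin n → ℝ, y = fun v => y0 v / β := ⟨_, rfl⟩
  rw [← hyd] at hy
  have hy' : ∀ v, mulA (joinG L H a b hab) y v = lam * y v := by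
    intro v; rw [hy v, hyd]
  have yn : ∀ v, 0 ≤ y v := fun v => by rw [hyd]; exact div_nonneg (y00 v) hβp.le
  have y1 : ∀ v ∈ L, y v ≤ 1 := fun v hv => by
    rw [hyd]; exact (div_le_one hβp).2 (hbd v hv)
  have ys : ∑ v ∈ Lᶜ, y v = lam - (k - 1) := by
    rw [hyd, ← sum_div, ← hs0, hβ]
    field_simp
  have eL := eqL y hy'
  have eR := eqR y hy'
  clear hy hyd hβ hbd hs0 hy0
  obtain ⟨T, hT⟩ : ∃ T, T = ∑ v ∈ L, (1 - y v) := ⟨_, rfl⟩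
  have hT0 : 0 ≤ T := by rw [hT]; exact sum_nonneg fun v hv => by linarith [y1 v hv]
  have hTs : ∑ v ∈ L, y v = L.card - T := by
    rw [hT, sum_sub_distrib]; simp
  have hD : ∑ v ∈ L, ((k : ℝ) - 1 - degIn H L v) ≤ 1 := by
    have e : ∑ v ∈ L, ((k : ℝ) - 1 - degIn H L v) = ((∑ v ∈ L, (k - 1 - degIn H L v) : ℕ) : ℝ) := by
      rw [Nat.cast_sum]
      refine sum_congr rfl fun v hv => ?_
      rw [Nat.cast_sub (hdeg v hv), hk1]
    rw [e]; exact_mod_cast hsum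
  have hTle : T * (lam - (k - 1)) ≤ 1 := by
    have h1 : lam * ∑ v ∈ L, y v = ∑ v ∈ L, (degIn H L v : ℝ) * y v + L.card * (lam - (k - 1)) := by
      rw [mul_sum, sum_congr rfl eL, sum_add_distrib, ys, sum_const, nsmul_eq_mul, sum_comm]
      congr 1
      refine sum_congr rfl fun v _ => ?_
      rw [← sum_mul, ← sum_aa]
      congr 1
      exact sum_congr rfl fun u _ => aa_symm _ _ _
    have h2 : ∑ v ∈ L, ((k : ℝ) - 1 - degIn H L v) * 1 + ∑ v ∈ L, (degIn H L v : ℝ) * (1 - y v)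
        = L.card * ((k : ℝ) - 1) - ∑ v ∈ L, (degIn H L v : ℝ) * y v := by
      rw [← sum_add_distrib]
      rw [show (L.card : ℝ) * ((k : ℝ) - 1) = ∑ v ∈ L, ((k : ℝ) - 1) by
        rw [sum_const, nsmul_eq_mul], ← sum_sub_distrib]
      exact sum_congr rfl fun v _ => by ring
    have h3 : ∑ v ∈ L, (degIn H L v : ℝ) * (1 - y v) ≤ ((k : ℝ) - 1) * T := by
      rw [hT, mul_sum]
      exact sum_le_sum fun v hv => mul_le_mul_of_nonneg_right (hdegR v hv) (by linarith [y1 v hv])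
    simp only [mul_one] at h2
    rw [hTs] at h1
    nlinarith
  have hT10 : ((k : ℝ) - 1) * T ≤ 1 / 10 := by nlinarith
  refine ⟨y, yn, hy', y1, by rw [← hT]; exact hT10, ?_⟩
  have hTs1 : T ≤ 1 / 10 := by nlinarith
  intro w hw
  constructor
  · have h1 := eR w hw
    have h2 : 0 ≤ ∑ v ∈ Lᶜ, aa (joinG L H a b hab) w v * y v :=
      sum_nonneg fun v _ => mul_nonneg (aa_nonneg _ _ _) (yn v)
    rw [hTs] at h1
    by_contra hcon
    push Not at hcon
    nlinarith
  · obtain ⟨w0, hw0, hmax⟩ := exists_max_image Lᶜ y ⟨w, mem_compl.2 hw⟩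
    refine (hmax w (mem_compl.2 hw)).trans ?_
    have h1 := eR w0 (mem_compl.1 hw0)
    have h2 : ∑ v ∈ Lᶜ, aa (joinG L H a b hab) w0 v * y v ≤ 1 * y w0 := by
      calc _ ≤ ∑ v ∈ Lᶜ, aa (joinG L H a b hab) w0 v * y w0 :=
            sum_le_sum fun v hv => mul_le_mul_of_nonneg_left (hmax v hv) (aa_nonneg _ _ _)
        _ = (degIn (joinG L H a b hab) Lᶜ w0 : ℝ) * y w0 := by rw [← sum_mul, sum_aa]
        _ ≤ _ := mul_le_mul_of_nonneg_right
            (by exact_mod_cast join_degR L H a b hab hH (mem_compl.1 hw0)) (yn _)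
    rw [hTs] at h1
    by_contra hcon
    push Not at hcon
    nlinarith
end

open Finset

lemma compare_main {n : ℕ} (hn : 0 < n) (k : ℕ) (hk : 3 ≤ k) (G : SimpleGraph (Fin n))
    (L : Finset (Fin n)) (H : SimpleGraph (Fin n)) (a b : Fin n) (hab : a ≠ b)
    (haL : a ∉ L) (hbL : b ∉ L)
    (hH : ∀ u v, H.Adj u v → u ∈ L)
    (hdeg : ∀ v ∈ L, degIn H L v ≤ k - 1)
    (hsum : ∑ v ∈ L, (k - 1 - degIn H L v) ≤ 1)
    (hl0 : lam1 (joinG L H a b hab) ≤ lam1 G)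
    (hl1 : 11 * (k : ℝ) ≤ lam1 (joinG L H a b hab))
    (hl2 : (L.card : ℝ) ≤ 2 * (lam1 (joinG L H a b hab) - 1))
    (hl3 : lam1 (joinG L H a b hab) ≤ 2 * (L.card : ℝ) - 1)
    (hdegG : ∀ v ∈ L, degIn G L v ≤ k - 1)
    (η : ℝ) (hη0 : 0 ≤ η) (hη : η ≤ 1) (x : Fin n → ℝ) (hx0 : ∀ v, 1 - η ≤ x v) (hx1 : ∀ v, x v ≤ 1)
    (hx : ∀ v, mulA G x v = lam1 G * x v) :
    ∃ y : Fin n → ℝ, (∀ v ∉ L, 1 / 2 ≤ y v ∧ y v ≤ 2) ∧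
      (1 - η) * ((∑ v ∈ L, (k - 1 - degIn G L v) : ℕ) : ℝ)
        - ((∑ v ∈ L, (k - 1 - degIn H L v) : ℕ) : ℝ) - 1 / 10
        + ∑ u ∈ Lᶜ, y u * ∑ w ∈ Lᶜ, (aa (joinG L H a b hab) u w - aa G u w) * x w ≤ 0 := by
  obtain ⟨y, y0, hy, y1, hT, hyR⟩ := join_perron k L H a b hab hn hk haL hbL hH hdeg hsum hl1 hl2 hl3
  refine ⟨y, hyR, ?_⟩
  have xn : ∀ v, 0 ≤ x v := fun v => by linarith [hx0 v]
  have key : ∑ u, y u * (mulA (joinG L H a b hab) x u - mulA G x u) ≤ 0 := by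
    have e1 : ∑ u, y u * mulA (joinG L H a b hab) x u
        = lam1 (joinG L H a b hab) * ∑ u, x u * y u := by
      rw [mulA_symm, mul_sum]
      exact sum_congr rfl fun u _ => by rw [hy]; ring
    have e2 : ∑ u, y u * mulA G x u = lam1 G * ∑ u, x u * y u := by
      rw [mul_sum]
      exact sum_congr rfl fun u _ => by rw [hx]; ring
    have e3 : 0 ≤ ∑ u, x u * y u := sum_nonneg fun u _ => mul_nonneg (xn u) (y0 u)
    simp only [mul_sub]
    rw [sum_sub_distrib, e1, e2]
    nlinarith
  have hdiff : ∀ u, mulA (joinG L H a b hab) x u - mulA G x u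
      = ∑ v ∈ L, (aa (joinG L H a b hab) u v - aa G u v) * x v
        + ∑ v ∈ Lᶜ, (aa (joinG L H a b hab) u v - aa G u v) * x v := by
    intro u
    rw [mulA_split L, mulA_split L]
    simp only [sub_mul, sum_sub_distrib]
    ring
  obtain ⟨E, hE⟩ : ∃ E : Fin n → ℝ, E = fun u => ∑ v ∈ L, (aa H u v - aa G u v) * x v := ⟨_, rfl⟩
  have hEv : ∀ u, E u = ∑ v ∈ L, (aa H u v - aa G u v) * x v := fun u => by rw [hE]
  have dL : ∀ u ∈ L, E u ≤ mulA (joinG L H a b hab) x u - mulA G x u := by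
    intro u hu
    rw [hdiff, hEv]
    have h1 : ∑ v ∈ L, (aa H u v - aa G u v) * x v
        = ∑ v ∈ L, (aa (joinG L H a b hab) u v - aa G u v) * x v :=
      sum_congr rfl fun v hv => by rw [join_LL L H a b hab haL hbL hu hv]
    have h2 : 0 ≤ ∑ v ∈ Lᶜ, (aa (joinG L H a b hab) u v - aa G u v) * x v :=
      sum_nonneg fun v hv => by
        rw [join_LR L H a b hab hu (mem_compl.1 hv)]
        exact mul_nonneg (by linarith [aa_le_one G u v]) (xn v)
    linarith
  have dR : ∀ u ∈ Lᶜ, ∑ v ∈ Lᶜ, (aa (joinG L H a b hab) u v - aa G u v) * x v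
      ≤ mulA (joinG L H a b hab) x u - mulA G x u := by
    intro u hu
    rw [hdiff]
    have h2 : 0 ≤ ∑ v ∈ L, (aa (joinG L H a b hab) u v - aa G u v) * x v :=
      sum_nonneg fun v hv => by
        rw [join_RL L H a b hab (mem_compl.1 hu) hv]
        exact mul_nonneg (by linarith [aa_le_one G u v]) (xn v)
    linarith
  rw [← sum_add_sum_compl L] at key
  have kR := sum_le_sum fun u hu => mul_le_mul_of_nonneg_left (dR u hu) (y0 u)
  have kL := sum_le_sum fun u hu => mul_le_mul_of_nonneg_left (dL u hu) (y0 u)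
  have hk1 : ((k - 1 : ℕ) : ℝ) = (k : ℝ) - 1 := by
    rw [Nat.cast_sub (by omega)]; simp
  have hk3 : (3 : ℝ) ≤ k := by exact_mod_cast hk
  -- E is small
  have Ele : ∀ u ∈ L, E u ≤ (k : ℝ) - 1 := by
    intro u hu
    rw [hEv]
    calc ∑ v ∈ L, (aa H u v - aa G u v) * x v ≤ ∑ v ∈ L, aa H u v := by
          refine sum_le_sum fun v _ => ?_
          have h1 := aa_nonneg H u v
          have h2 := aa_nonneg G u v
          nlinarith [xn v, hx1 v]
      _ = (degIn H L u : ℝ) := sum_aa _ _ _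
      _ ≤ _ := by rw [← hk1]; exact_mod_cast hdeg u hu
  have Et : ∑ u ∈ L, (1 - y u) * E u ≤ 1 / 10 := by
    refine le_trans ?_ hT
    rw [mul_sum]
    refine sum_le_sum fun u hu => ?_
    rw [mul_comm]
    exact mul_le_mul_of_nonneg_right (Ele u hu) (by linarith [y1 u hu])
  have Es : (1 - η) * ((∑ v ∈ L, (k - 1 - degIn G L v) : ℕ) : ℝ)
        - ((∑ v ∈ L, (k - 1 - degIn H L v) : ℕ) : ℝ) ≤ ∑ u ∈ L, E u := by
    have h1 : ∑ u ∈ L, E u = ∑ v ∈ L, ((degIn H L v : ℝ) - degIn G L v) * x v := by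
      simp only [hEv]
      rw [sum_comm]
      refine sum_congr rfl fun v _ => ?_
      rw [← sum_mul, ← sum_aa, ← sum_aa, sum_sub_distrib]
      congr 2
      · exact sum_congr rfl fun u _ => aa_symm _ _ _
      · exact sum_congr rfl fun u _ => aa_symm _ _ _
    rw [h1, Nat.cast_sum, Nat.cast_sum, mul_sum, ← sum_sub_distrib]
    refine sum_le_sum fun v hv => ?_
    rw [Nat.cast_sub (hdegG v hv), Nat.cast_sub (hdeg v hv), hk1]
    have h2 : (degIn H L v : ℝ) ≤ (k : ℝ) - 1 := by rw [← hk1]; exact_mod_cast hdeg v hv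
    have h3 : (degIn G L v : ℝ) ≤ (k : ℝ) - 1 := by rw [← hk1]; exact_mod_cast hdegG v hv
    nlinarith [hx0 v, hx1 v]
  have Esplit : ∑ u ∈ L, y u * E u = ∑ u ∈ L, E u - ∑ u ∈ L, (1 - y u) * E u := by
    rw [← sum_sub_distrib]
    exact sum_congr rfl fun u _ => by ring
  linarith

open Finset

section
variable {n : ℕ} (G : SimpleGraph (Fin n)) (k m : ℕ) (L R : Finset (Fin n))

open Classical in
/-- common neighbourhood in `R` of `v` and its neighbours in `L`. -/
noncomputable def TS (v : Fin n) : Finset (Fin n) :=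
  R.filter fun w => G.Adj v w ∧ ∀ u ∈ L, G.Adj v u → G.Adj u w

lemma mem_TS {v w : Fin n} : w ∈ TS G L R v ↔ w ∈ R ∧ G.Adj v w ∧ ∀ u ∈ L, G.Adj v u → G.Adj u w := by
  classical
  unfold TS; rw [mem_filter]

lemma common_card (S : Finset (Fin n)) (hm : ∀ s ∈ S, (R \ nb G s).card ≤ m) :
    R.card ≤ (R.filter fun w => ∀ s ∈ S, w ∈ nb G s).card + S.card * m := by
  classical
  have h1 : (S.biUnion fun s => R \ nb G s).card ≤ S.card * m := card_biUnion_le_card_mul _ _ _ hm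
  have h2 : R ⊆ (R.filter fun w => ∀ s ∈ S, w ∈ nb G s) ∪ (S.biUnion fun s => R \ nb G s) := by
    intro w hw
    by_cases h : ∀ s ∈ S, w ∈ nb G s
    · exact mem_union_left _ (mem_filter.2 ⟨hw, h⟩)
    · push Not at h
      obtain ⟨s, hs, h⟩ := h
      exact mem_union_right _ (mem_biUnion.2 ⟨s, hs, mem_sdiff.2 ⟨hw, h⟩⟩)
  have h3 := card_le_card h2
  have h4 := card_union_le (R.filter fun w => ∀ s ∈ S, w ∈ nb G s) (S.biUnion fun s => R \ nb G s)
  omega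

lemma deg_bound (hk : 3 ≤ k) (hG : WheelFree (2 * k + 1) G)
    (hm : ∀ s ∈ L, (R \ nb G s).card ≤ m) (hR : (k + 1) * m + k ≤ R.card) :
    ∀ v ∈ L, degIn G L v ≤ k - 1 := by
  classical
  intro v hv
  by_contra hcon
  rw [degIn_eq] at hcon
  obtain ⟨A, hA, hAc⟩ := exists_subset_card_eq (s := L ∩ nb G v) (n := k) (by omega)
  have hAL : ∀ u ∈ A, u ∈ L ∧ G.Adj v u := by
    intro u hu
    have := mem_inter.1 (hA hu)
    exact ⟨this.1, (mem_nb _ _ _).1 this.2⟩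
  have hc := common_card G m R (insert v A) (by
    intro s hs
    rcases mem_insert.1 hs with rfl | hs
    · exact hm _ hv
    · exact hm _ (hAL s hs).1)
  have hi := card_insert_le v A
  have hi2 : (insert v A).card * m ≤ (k + 1) * m := Nat.mul_le_mul_right _ (by omega)
  apply hG
  refine wheel_of_Kkk G k (by omega) v A (R.filter fun w => ∀ s ∈ insert v A, w ∈ nb G s)
    (by omega) (by omega) (fun u hu => (hAL u hu).2) ?_ ?_
  · intro w hw
    exact (mem_nb _ _ _).1 ((mem_filter.1 hw).2 v (mem_insert_self _ _))
  · intro u hu w hw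
    exact (mem_nb _ _ _).1 ((mem_filter.1 hw).2 u (mem_insert_of_mem hu))

lemma TS_card (hk : 3 ≤ k) (hm : ∀ s ∈ L, (R \ nb G s).card ≤ m) {v : Fin n} (hv : v ∈ L)
    (hd : degIn G L v ≤ k - 1) : R.card ≤ (TS G L R v).card + k * m := by
  classical
  have hc := common_card G m R (insert v (L ∩ nb G v)) (by
    intro s hs
    rcases mem_insert.1 hs with rfl | hs
    · exact hm _ hv
    · exact hm _ (mem_inter.1 hs).1)
  have hi := card_insert_le v (L ∩ nb G v)
  rw [degIn_eq] at hd
  have hi2 : (insert v (L ∩ nb G v)).card * m ≤ k * m := Nat.mul_le_mul_right _ (by omega)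
  have : (R.filter fun w => ∀ s ∈ insert v (L ∩ nb G v), w ∈ nb G s) ⊆ TS G L R v := by
    intro w hw
    obtain ⟨h1, h2⟩ := mem_filter.1 hw
    rw [mem_TS]
    refine ⟨h1, (mem_nb _ _ _).1 (h2 v (mem_insert_self _ _)), fun u hu hvu => ?_⟩
    exact (mem_nb _ _ _).1 (h2 u (mem_insert_of_mem (mem_inter.2 ⟨hu, (mem_nb _ _ _).2 hvu⟩)))
  have := card_le_card this
  omega

lemma noTwo (hk : 3 ≤ k) (hG : WheelFree (2 * k + 1) G) {v : Fin n}
    (hd : degIn G L v = k - 1) (hT : k + 4 ≤ (TS G L R v).card) {a b c d : Fin n}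
    (ha : a ∈ TS G L R v) (hb : b ∈ TS G L R v) (hc : c ∈ TS G L R v) (hd' : d ∈ TS G L R v)
    (hab : G.Adj a b) (hcd : G.Adj c d) : (a = c ∧ b = d) ∨ (a = d ∧ b = c) := by
  classical
  rw [degIn_eq] at hd
  have hA : k - 1 ≤ (L ∩ nb G v).card := by omega
  have h1 : ∀ u ∈ L ∩ nb G v, G.Adj v u := fun u hu => (mem_nb _ _ _).1 (mem_inter.1 hu).2
  have h2 : ∀ w ∈ TS G L R v, G.Adj v w := fun w hw => ((mem_TS G L R).1 hw).2.1
  have h3 : ∀ u ∈ L ∩ nb G v, ∀ w ∈ TS G L R v, G.Adj u w := fun u hu w hw =>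
    ((mem_TS G L R).1 hw).2.2 u (mem_inter.1 hu).1 (h1 u hu)
  have P3 : ∀ a b c : Fin n, a ∈ TS G L R v → b ∈ TS G L R v → c ∈ TS G L R v → G.Adj a b → G.Adj b c →
      a = c := by
    intro a b c ha hb hc hab hbc
    by_contra hac
    exact hG (wheel_of_P3 G k hk v (L ∩ nb G v) (TS G L R v) hA hT h1 h2 h3 a b c ha hb hc hab hbc hac)
  by_cases e1 : a = c
  · left; refine ⟨e1, ?_⟩
    subst e1
    exact P3 b a d hb ha hd' hab.symm hcd
  by_cases e2 : a = d
  · right; refine ⟨e2, ?_⟩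
    subst e2
    exact P3 b a c hb ha hc hab.symm hcd.symm
  by_cases e3 : b = c
  · subst e3
    exact absurd (P3 a b d ha hb hd' hab hcd) e2
  by_cases e4 : b = d
  · subst e4
    exact absurd (P3 a b c ha hb hc hab hcd.symm) e1
  exact absurd (wheel_of_twoEdges G k hk v (L ∩ nb G v) (TS G L R v) hA hT h1 h2 h3 a b c d ha hb hc hd'
    hab hcd e1 e2 e3 e4) hG

lemma degIn_comm (A B : Finset (Fin n)) : ∑ w ∈ A, degIn G B w = ∑ w ∈ B, degIn G A w := by
  have : ((∑ w ∈ A, degIn G B w : ℕ) : ℝ) = ((∑ w ∈ B, degIn G A w : ℕ) : ℝ) := by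
    rw [Nat.cast_sum, Nat.cast_sum]
    simp only [← sum_aa]
    rw [sum_comm]
    exact sum_congr rfl fun u _ => sum_congr rfl fun v _ => aa_symm _ _ _
  exact_mod_cast this

lemma degIn_split {A B : Finset (Fin n)} (h : A ⊆ B) (w : Fin n) :
    degIn G B w = degIn G A w + degIn G (B \ A) w := by
  have : (degIn G B w : ℝ) = degIn G A w + degIn G (B \ A) w := by
    simp only [← sum_aa]
    rw [add_comm, sum_sdiff h]
  exact_mod_cast this

lemma degIn_mono {A B : Finset (Fin n)} (h : A ⊆ B) (w : Fin n) : degIn G A w ≤ degIn G B w := by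
  rw [degIn_split G h]; omega

lemma Pbound (T : Finset (Fin n)) (hT : T ⊆ R) (hdR : ∀ w ∈ R, degIn G R w ≤ k - 1)
    (hone : ∀ a b c d, a ∈ T → b ∈ T → c ∈ T → d ∈ T → G.Adj a b → G.Adj c d →
      (a = c ∧ b = d) ∨ (a = d ∧ b = c)) :
    ∑ w ∈ R, degIn G R w ≤ 2 * ((R \ T).card * (k - 1)) + 2 := by
  classical
  have hsub : R \ T ⊆ R := sdiff_subset
  have h1 : ∑ w ∈ R \ T, degIn G R w ≤ (R \ T).card * (k - 1) := by
    rw [← smul_eq_mul]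
    exact sum_le_card_nsmul _ _ _ fun w hw => hdR w (hsub hw)
  have h2 : ∑ w ∈ T, degIn G (R \ T) w ≤ (R \ T).card * (k - 1) := by
    rw [degIn_comm, ← smul_eq_mul]
    exact sum_le_card_nsmul _ _ _ fun w hw => (degIn_mono G hT w).trans (hdR w (hsub hw))
  have h3 : ∑ w ∈ T, degIn G T w ≤ 2 := by
    by_cases hex : ∃ a ∈ T, ∃ b ∈ T, G.Adj a b
    · obtain ⟨a, ha, b, hb, hab⟩ := hex
      have : ∀ w ∈ T, degIn G T w ≤ (if w = a then 1 else 0) + (if w = b then 1 else 0) := by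
        intro w hw
        by_cases hw' : w = a ∨ w = b
        · have : degIn G T w ≤ 1 := by
            rw [degIn_eq, card_le_one]
            intro u hu v hv
            obtain ⟨hu1, hu2⟩ := mem_inter.1 hu
            obtain ⟨hv1, hv2⟩ := mem_inter.1 hv
            rw [mem_nb] at hu2 hv2
            rcases hone w u w v hw hu1 hw hv1 hu2 hv2 with h | h
            · exact h.2
            · exact absurd h.1 hv2.ne
          refine this.trans ?_
          rcases hw' with h | h
          · rw [if_pos h]; omega
          · rw [if_pos h]; omega
        · push Not at hw'
          rw [if_neg hw'.1, if_neg hw'.2, degIn_eq]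
          simp only [add_zero, Nat.le_zero, card_eq_zero]
          rw [eq_empty_iff_forall_notMem]
          intro u hu
          obtain ⟨hu1, hu2⟩ := mem_inter.1 hu
          rw [mem_nb] at hu2
          rcases hone w u a b hw hu1 ha hb hu2 hab with h | h
          · exact hw'.1 h.1
          · exact hw'.2 h.1
      refine (sum_le_sum this).trans ?_
      rw [sum_add_distrib, sum_ite_eq', sum_ite_eq', if_pos ha, if_pos hb]
    · push Not at hex
      rw [sum_eq_zero]
      · omega
      · intro w hw
        rw [degIn_eq, card_eq_zero, eq_empty_iff_forall_notMem]
        intro u hu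
        obtain ⟨hu1, hu2⟩ := mem_inter.1 hu
        exact hex w hw u hu1 ((mem_nb _ _ _).1 hu2)
  have h4 : ∑ w ∈ R, degIn G R w = ∑ w ∈ R \ T, degIn G R w + ∑ w ∈ T, degIn G R w :=
    (sum_sdiff hT).symm
  have h5 : ∑ w ∈ T, degIn G R w = ∑ w ∈ T, degIn G T w + ∑ w ∈ T, degIn G (R \ T) w := by
    rw [← sum_add_distrib]
    exact sum_congr rfl fun w _ => degIn_split G hT w
  omega

lemma bad_card (hk : 3 ≤ k) (hmL : ∀ s ∈ R, (L \ nb G s).card ≤ m)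
    (hdL : ∀ v ∈ L, degIn G L v ≤ k - 1) {w : Fin n} (hw : w ∈ R) :
    (L.filter fun v => w ∉ TS G L R v).card ≤ k * m := by
  classical
  have hsub : (L.filter fun v => w ∉ TS G L R v) ⊆
      (L \ nb G w) ∪ (L \ nb G w).biUnion fun u => L ∩ nb G u := by
    intro v hv
    obtain ⟨h1, h2⟩ := mem_filter.1 hv
    rw [mem_TS] at h2
    by_cases h3 : G.Adj w v
    · refine mem_union_right _ ?_
      have : ∃ u ∈ L, G.Adj v u ∧ ¬ G.Adj u w := by
        by_contra hcon
        push Not at hcon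
        exact h2 ⟨hw, h3.symm, hcon⟩
      obtain ⟨u, hu, hvu, huw⟩ := this
      refine mem_biUnion.2 ⟨u, mem_sdiff.2 ⟨hu, ?_⟩, mem_inter.2 ⟨h1, ?_⟩⟩
      · rw [mem_nb]; exact fun h => huw h.symm
      · rw [mem_nb]; exact hvu.symm
    · exact mem_union_left _ (mem_sdiff.2 ⟨h1, by rwa [mem_nb]⟩)
  have h1 := card_le_card hsub
  have h2 := card_union_le (L \ nb G w) ((L \ nb G w).biUnion fun u => L ∩ nb G u)
  have h3 : ((L \ nb G w).biUnion fun u => L ∩ nb G u).card ≤ (L \ nb G w).card * (k - 1) := by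
    refine card_biUnion_le_card_mul _ _ _ fun u hu => ?_
    rw [← degIn_eq]
    exact hdL u (mem_sdiff.1 hu).1
  have h4 := hmL w hw
  have h5 : (L \ nb G w).card + (L \ nb G w).card * (k - 1) = (L \ nb G w).card * k := by
    obtain ⟨j, rfl⟩ : ∃ j, k = j + 1 := ⟨k - 1, by omega⟩
    simp only [Nat.add_sub_cancel]; ring
  have h6 : (L \ nb G w).card * k ≤ m * k := Nat.mul_le_mul_right _ h4
  rw [mul_comm k m]
  omega

lemma one_edge (hk : 3 ≤ k) (hG : WheelFree (2 * k + 1) G)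
    (hm : ∀ s ∈ L, (R \ nb G s).card ≤ m) (hmL : ∀ s ∈ R, (L \ nb G s).card ≤ m)
    (hdL : ∀ v ∈ L, degIn G L v ≤ k - 1)
    (hR : k * m + k + 4 ≤ R.card)
    (hD : ∑ v ∈ L, (k - 1 - degIn G L v) + 4 * (k * m) < L.card)
    {a b c d : Fin n} (ha : a ∈ R) (hb : b ∈ R) (hc : c ∈ R) (hd : d ∈ R)
    (hab : G.Adj a b) (hcd : G.Adj c d) : (a = c ∧ b = d) ∨ (a = d ∧ b = c) := by
  classical
  have hlow : (L.filter fun v => degIn G L v ≠ k - 1).card ≤ ∑ v ∈ L, (k - 1 - degIn G L v) := by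
    rw [card_filter]
    refine sum_le_sum fun v hv => ?_
    have := hdL v hv
    split_ifs <;> omega
  obtain ⟨v, hv, h0, h1, h2, h3, h4⟩ : ∃ v ∈ L, degIn G L v = k - 1 ∧ a ∈ TS G L R v ∧ b ∈ TS G L R v ∧
      c ∈ TS G L R v ∧ d ∈ TS G L R v := by
    by_contra hcon
    push Not at hcon
    have hsub : L ⊆ (L.filter fun v => degIn G L v ≠ k - 1) ∪ ((L.filter fun v => a ∉ TS G L R v) ∪
      ((L.filter fun v => b ∉ TS G L R v) ∪ ((L.filter fun v => c ∉ TS G L R v) ∪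
        (L.filter fun v => d ∉ TS G L R v)))) := by
      intro v hv
      have := hcon v hv
      simp only [mem_union, mem_filter]
      tauto
    have := card_le_card hsub
    have u1 := card_union_le (L.filter fun v => degIn G L v ≠ k - 1)
      ((L.filter fun v => a ∉ TS G L R v) ∪
      ((L.filter fun v => b ∉ TS G L R v) ∪ ((L.filter fun v => c ∉ TS G L R v) ∪
        (L.filter fun v => d ∉ TS G L R v))))
    have u2 := card_union_le (L.filter fun v => a ∉ TS G L R v)
      ((L.filter fun v => b ∉ TS G L R v) ∪ ((L.filter fun v => c ∉ TS G L R v) ∪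
        (L.filter fun v => d ∉ TS G L R v)))
    have u3 := card_union_le (L.filter fun v => b ∉ TS G L R v)
      ((L.filter fun v => c ∉ TS G L R v) ∪ (L.filter fun v => d ∉ TS G L R v))
    have u4 := card_union_le (L.filter fun v => c ∉ TS G L R v) (L.filter fun v => d ∉ TS G L R v)
    have b1 := bad_card G k m L R hk hmL hdL ha
    have b2 := bad_card G k m L R hk hmL hdL hb
    have b3 := bad_card G k m L R hk hmL hdL hc
    have b4 := bad_card G k m L R hk hmL hdL hd
    omega
  have hTc := TS_card G k m L R hk hm hv (hdL v hv)
  exact noTwo G k L R hk hG h0 (by omega) h1 h2 h3 h4 hab hcd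

lemma handshake : Even (∑ v ∈ L, degIn G L v) := by
  classical
  induction L using Finset.induction_on with
  | empty => simp
  | insert v L hv ih =>
    have h1 : ∀ u, degIn G (insert v L) u = degIn G L u + degIn G {v} u := by
      intro u
      rw [degIn_split G (subset_insert v L)]
      congr 2
      ext w; simp only [mem_sdiff, mem_insert, mem_singleton]
      constructor
      · rintro ⟨h | h, h'⟩
        · exact h
        · exact absurd h h'
      · rintro rfl; exact ⟨Or.inl rfl, hv⟩
    rw [sum_insert hv, h1, sum_congr rfl (fun u _ => h1 u), sum_add_distrib, degIn_comm G L {v},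
      sum_singleton]
    have h2 : degIn G {v} v = 0 := by
      rw [degIn_eq, card_eq_zero, eq_empty_iff_forall_notMem]
      intro u hu
      obtain ⟨h3, h4⟩ := mem_inter.1 hu
      rw [mem_nb] at h4
      exact h4.ne (mem_singleton.1 h3).symm
    rw [h2]
    obtain ⟨t, ht⟩ := ih
    exact ⟨t + degIn G L v, by omega⟩

lemma parity (hdL : ∀ v ∈ L, degIn G L v ≤ k - 1) :
    (∑ v ∈ L, (k - 1 - degIn G L v)) % 2 = ((k - 1) * L.card) % 2 := by
  have h1 : ∑ v ∈ L, (k - 1 - degIn G L v) + ∑ v ∈ L, degIn G L v = (k - 1) * L.card := by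
    rw [← sum_add_distrib, sum_congr rfl (fun v hv => Nat.sub_add_cancel (hdL v hv)), sum_const,
      smul_eq_mul, mul_comm]
  obtain ⟨t, ht⟩ := handshake G L
  omega

lemma edgeCount_one {a b : Fin n} (ha : a ∈ R) (hb : b ∈ R) (hab : G.Adj a b)
    (huniq : ∀ c d, c ∈ R → d ∈ R → G.Adj c d → (a = c ∧ b = d) ∨ (a = d ∧ b = c)) :
    edgeCount (G.induce (R : Set (Fin n))) = 1 := by
  classical
  unfold edgeCount
  rw [card_eq_one]
  refine ⟨s(⟨a, ha⟩, ⟨b, hb⟩), ?_⟩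
  ext e
  induction e using Sym2.ind with
  | _ c d =>
    rw [SimpleGraph.mem_edgeFinset, SimpleGraph.mem_edgeSet, mem_singleton, Sym2.eq_iff]
    obtain ⟨c, hc⟩ := c
    obtain ⟨d, hd⟩ := d
    simp only [SimpleGraph.comap_adj, Function.Embedding.subtype_apply, Subtype.mk.injEq]
    constructor
    · intro h
      rcases huniq c d hc hd h with ⟨p, q⟩ | ⟨p, q⟩
      · exact Or.inl ⟨p.symm, q.symm⟩
      · exact Or.inr ⟨q.symm, p.symm⟩
    · rintro (⟨p, q⟩ | ⟨p, q⟩)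
      · rw [p, q]; exact hab
      · rw [p, q]; exact hab.symm
end

open Finset

lemma sdiff_nb_card {n : ℕ} (G : SimpleGraph (Fin n)) (R : Finset (Fin n)) (s : Fin n) (t : ℝ)
    (h : (R.card : ℝ) - degIn G R s ≤ t) : (R \ nb G s).card ≤ ⌊t⌋₊ := by
  classical
  refine Nat.le_floor ?_
  have h1 : (R \ nb G s).card + (R ∩ nb G s).card = R.card := card_sdiff_add_card_inter _ _
  rw [← degIn_eq] at h1
  have : ((R \ nb G s).card : ℝ) + degIn G R s = R.card := by exact_mod_cast h1
  linarith

set_option maxHeartbeats 4000000 in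
lemma regular_aux (k : ℕ) (hk : 3 ≤ k) :
    ∃ N : ℕ, ∀ n : ℕ, N ≤ n → ∀ G : SimpleGraph (Fin n), IsSpexWheel (2 * k + 1) G →
      ∀ L R : Finset (Fin n), IsMaxCut G L R →
        (∃ v ∈ L, degIn G L v = k - 1) →
        (∀ v ∈ L, degIn G L v ≤ k - 1) ∧
        (∑ v ∈ L, (k - 1 - degIn G L v) = ((k - 1) * L.card) % 2) ∧
        edgeCount (G.induce (R : Set (Fin n))) = 1 := by
  classical
  have hk3 : (3 : ℝ) ≤ k := by exact_mod_cast hk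
  obtain ⟨η, hηd⟩ : ∃ η : ℝ, η = 1 / (100 * (k : ℝ) ^ 2) := ⟨_, rfl⟩
  have hη0 : 0 < η := by rw [hηd]; positivity
  have hηk : η * (100 * (k : ℝ) ^ 2) = 1 := by rw [hηd]; field_simp
  have hη900 : η ≤ 1 / 900 := by
    rw [hηd]; exact one_div_le_one_div_of_le (by norm_num) (by nlinarith)
  have hη16 : η ≤ 1 / (16 * k) := by
    rw [hηd]; exact one_div_le_one_div_of_le (by positivity) (by nlinarith)
  obtain ⟨N0, hN0⟩ := struct2 k (by omega) η hη0 hη16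
  refine ⟨max N0 (1000 * k ^ 2), ?_⟩
  intro n hn G hG L R hcut ⟨v0, hv0, hv0d⟩
  have hnN : N0 ≤ n := le_trans (le_max_left _ _) hn
  have hnk : 1000 * k ^ 2 ≤ n := le_trans (le_max_right _ _) hn
  have hnkR : 1000 * (k : ℝ) ^ 2 ≤ n := by exact_mod_cast hnk
  have hnpos : 0 < n := lt_of_lt_of_le (by positivity) hnk
  obtain ⟨hLc, hRc, hmL, hmR, hlam1, hlam2, x, hx0, hx1, hx⟩ := hN0 n hnN G hG L R hcut
  have hRL : R = Lᶜ := hcut.1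
  have hcardN : L.card + R.card = n := by
    rw [hRL, card_add_card_compl, Fintype.card_fin]
  have hcardR : (L.card : ℝ) + R.card = n := by exact_mod_cast hcardN
  obtain ⟨m, hmd⟩ : ∃ m, m = ⌊η * n⌋₊ := ⟨_, rfl⟩
  have hmn : (m : ℝ) ≤ η * n := by rw [hmd]; exact Nat.floor_le (by positivity)
  have hm1 : ∀ s ∈ L, (R \ nb G s).card ≤ m := fun s hs => by
    rw [hmd]; exact sdiff_nb_card G R s _ (hmL s hs)
  have hm2 : ∀ s ∈ R, (L \ nb G s).card ≤ m := fun s hs => by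
    rw [hmd]; exact sdiff_nb_card G L s _ (hmR s hs)
  -- numeric facts
  have hnR : (0 : ℝ) < n := by exact_mod_cast hnpos
  have hk2m : (k : ℝ) ^ 2 * m ≤ n / 100 := by
    have : (k : ℝ) ^ 2 * m ≤ (k : ℝ) ^ 2 * (η * n) := by gcongr
    have e : (k : ℝ) ^ 2 * (η * n) = n / 100 := by
      rw [show (k : ℝ) ^ 2 * (η * n) = (η * (100 * (k : ℝ) ^ 2)) * (n / 100) by ring, hηk, one_mul]
    linarith
  have hm0 : (0 : ℝ) ≤ m := Nat.cast_nonneg _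
  have hkm3 : 3 * ((k : ℝ) * m) ≤ (k : ℝ) ^ 2 * m := by
    have := mul_le_mul_of_nonneg_right hk3 (show (0 : ℝ) ≤ k * m by positivity)
    linarith only [this]
  have hkm : (k : ℝ) * m ≤ n / 300 := by linarith only [hkm3, hk2m]
  have hmm3 : 3 * (m : ℝ) ≤ k * m := mul_le_mul_of_nonneg_right hk3 hm0
  have hmm : (m : ℝ) ≤ n / 900 := by linarith only [hmm3, hkm]
  have hkk : 3 * (k : ℝ) ≤ (k : ℝ) ^ 2 := by
    have := mul_le_mul_of_nonneg_right hk3 (show (0 : ℝ) ≤ k by positivity)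
    linarith only [this]
  have hkn : (k : ℝ) ≤ n / 3000 := by linarith only [hkk, hnkR]
  have hηn : η * n ≤ n / 900 := by
    have := mul_le_mul_of_nonneg_right hη900 hnR.le
    linarith
  have hL1 : (L.card : ℝ) ≤ 51 / 100 * n := by linarith only [hLc, hηn, hnR]
  have hR1 : (R.card : ℝ) ≤ 51 / 100 * n := by linarith only [hRc, hηn, hnR]
  have hL2 : 49 / 100 * (n : ℝ) ≤ L.card := by linarith only [hR1, hcardR]
  have hR2 : 49 / 100 * (n : ℝ) ≤ R.card := by linarith only [hL1, hcardR]
  have hn9000 : (9000 : ℝ) ≤ n := by linarith only [hkk, hnkR, hk3]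
  have hLbig : 2 * k * k + k + 1 ≤ L.card := by
    have : (2 * k * k + k + 1 : ℝ) ≤ L.card := by linarith only [hkk, hnkR, hkn, hL2, hn9000]
    exact_mod_cast this
  have hRk1 : (k + 1) * m + k ≤ R.card := by
    have : ((k + 1) * m + k : ℝ) ≤ R.card := by linarith only [hkm, hmm, hkn, hR2, hnR]
    exact_mod_cast this
  have hLk1 : (k + 1) * m + k ≤ L.card := by
    have : ((k + 1) * m + k : ℝ) ≤ L.card := by linarith only [hkm, hmm, hkn, hL2, hnR]
    exact_mod_cast this
  have hRk2 : k * m + k + 4 ≤ R.card := by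
    have : (k * m + k + 4 : ℝ) ≤ R.card := by linarith only [hkm, hmm, hkn, hR2, hn9000]
    exact_mod_cast this
  have hfree := hG.1
  have hdL := deg_bound G k m L R hk hfree hm1 hRk1
  have hdR := deg_bound G k m R L hk hfree hm2 hLk1
  refine ⟨hdL, ?_⟩
  -- the comparison inequality
  obtain ⟨H, c, hH, hHd, hHs, hHc⟩ := exists_H k hk L hLbig
  have hpar := parity G k L hdL
  have hmod : ((k - 1) * L.card) % 2 ≤ 1 := by omega
  rw [← hHs] at hpar
  obtain ⟨D', hD'⟩ : ∃ D', D' = ((k - 1) * L.card) % 2 := ⟨_, rfl⟩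
  obtain ⟨D, hD⟩ : ∃ D, D = ∑ v ∈ L, (k - 1 - degIn G L v) := ⟨_, rfl⟩
  have hcomp : ∀ (a b : Fin n) (hab : a ≠ b), a ∉ L → b ∉ L →
      ∃ y : Fin n → ℝ, (∀ v ∉ L, 1 / 2 ≤ y v ∧ y v ≤ 2) ∧
      (1 - η) * (D : ℝ) - (D' : ℝ) - 1 / 10
        + ∑ u ∈ Lᶜ, y u * ∑ w ∈ Lᶜ, (aa (joinG L H a b hab) u w - aa G u w) * x w ≤ 0 := by
    intro a b hab ha hb
    have hl0 := hG.2 _ (joinG_free k hk L H c a b hab ha hb hH hHd hHc)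
    have hlow := join_lam_lower L H a b hab hnpos
    rw [← hRL] at hlow
    have hl9 : 45 / 100 * (n : ℝ) ≤ lam1 (joinG L H a b hab) := by
      have h1 : (45 / 100 * (n : ℝ)) * n ≤ lam1 (joinG L H a b hab) * n := by
        refine le_trans ?_ hlow
        have : (49 / 100 * (n : ℝ)) * (49 / 100 * n) ≤ L.card * R.card := by gcongr
        have hnn2 : 0 ≤ (n : ℝ) * n := by positivity
        linarith only [this, hnn2]
      exact le_of_mul_le_mul_right h1 hnR
    have := compare_main hnpos k hk G L H a b hab ha hb (fun u v h => (hH u v h).1) hHd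
      (by rw [hHs]; exact hmod) hl0 (by linarith only [hl9, hkn, hnR]) (by linarith only [hl9, hL1, hn9000])
      (by linarith only [hl0, hlam2, hηn, hL2, hn9000]) hdL η hη0.le (by linarith only [hη900]) x hx0 hx1 hx
    rw [← hD, hHs, ← hD'] at this
    exact this
  have hD'1 : (D' : ℝ) ≤ 1 := by
    rw [hD']; exact_mod_cast hmod
  have hx0' : ∀ v, 0 ≤ x v := fun v => by linarith only [hx0 v, hη900]
  -- number of edges in R is small
  have hP : ∑ w ∈ R, degIn G R w ≤ 2 * ((k * m) * (k - 1)) + 2 := by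
    have hT := TS_card G k m L R hk hm1 hv0 hv0d.le
    have hTR : TS G L R v0 ⊆ R := fun w hw => ((mem_TS G L R).1 hw).1
    have h1 := Pbound G k R (TS G L R v0) hTR hdR (fun a b c d ha hb hc hd hab hcd =>
      noTwo G k L R hk hfree hv0d (by omega) ha hb hc hd hab hcd)
    have h2 := card_sdiff_add_card_eq_card hTR
    have h3 : (R \ TS G L R v0).card * (k - 1) ≤ (k * m) * (k - 1) :=
      Nat.mul_le_mul_right _ (by omega)
    omega
  have hPR : ((∑ w ∈ R, degIn G R w : ℕ) : ℝ) ≤ n / 50 + 2 := by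
    have h1 : (k * m) * (k - 1) ≤ k ^ 2 * m := by
      calc (k * m) * (k - 1) ≤ (k * m) * k := Nat.mul_le_mul_left _ (by omega)
        _ = k ^ 2 * m := by ring
    have h2 : ∑ w ∈ R, degIn G R w ≤ 2 * (k ^ 2 * m) + 2 := by omega
    have h3 : ((∑ w ∈ R, degIn G R w : ℕ) : ℝ) ≤ 2 * ((k : ℝ) ^ 2 * m) + 2 := by exact_mod_cast h2
    linarith
  -- two vertices in R
  have hR1c : 1 < R.card := by
    have : 0 ≤ k * m := Nat.zero_le _
    omega
  obtain ⟨a0, ha0, b0, hb0, hab0⟩ := one_lt_card.1 hR1c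
  have hnotL : ∀ w ∈ R, w ∉ L := fun w hw => by rw [hRL] at hw; exact mem_compl.1 hw
  have hDsmall : (D : ℝ) ≤ n / 20 + 7 := by
    obtain ⟨y, hy, hineq⟩ := hcomp a0 b0 hab0 (hnotL _ ha0) (hnotL _ hb0)
    have hlow : -(2 * ((∑ w ∈ R, degIn G R w : ℕ) : ℝ)) ≤
        ∑ u ∈ Lᶜ, y u * ∑ w ∈ Lᶜ, (aa (joinG L H a0 b0 hab0) u w - aa G u w) * x w := by
      rw [Nat.cast_sum, mul_sum, ← sum_neg_distrib, hRL]
      refine sum_le_sum fun u hu => ?_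
      obtain ⟨hy1, hy2⟩ := hy u (mem_compl.1 hu)
      have h1 : -(degIn G Lᶜ u : ℝ) ≤ ∑ w ∈ Lᶜ, (aa (joinG L H a0 b0 hab0) u w - aa G u w) * x w := by
        rw [← sum_aa, ← sum_neg_distrib]
        refine sum_le_sum fun w _ => ?_
        have e1 := mul_nonneg (aa_nonneg (joinG L H a0 b0 hab0) u w) (hx0' w)
        have e2 := mul_le_mul_of_nonneg_left (hx1 w) (aa_nonneg G u w)
        linarith only [e1, e2]
      have h2 : (0 : ℝ) ≤ degIn G Lᶜ u := Nat.cast_nonneg _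
      have h3 := mul_le_mul_of_nonneg_left h1 (show 0 ≤ y u by linarith only [hy1])
      have h4 := mul_le_mul_of_nonneg_right hy2 h2
      linarith only [h3, h4]
    have hD0 : (0 : ℝ) ≤ D := Nat.cast_nonneg _
    have hD1 := mul_le_mul_of_nonneg_right hη900 hD0
    linarith only [hlow, hineq, hPR, hD1, hD'1, hD0, hnR]
  have hone : ∀ a b c d, a ∈ R → b ∈ R → c ∈ R → d ∈ R → G.Adj a b → G.Adj c d →
      (a = c ∧ b = d) ∨ (a = d ∧ b = c) := by
    intro a b c d ha hb hc hd hab hcd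
    refine one_edge G k m L R hk hfree hm1 hm2 hdL hRk2 ?_ ha hb hc hd hab hcd
    rw [← hD]
    have : (D + 4 * (k * m) : ℝ) < L.card := by linarith only [hDsmall, hkm, hL2, hn9000]
    exact_mod_cast this
  rw [← hD, hHs, ← hD'] at hpar
  -- there is an edge in R
  have hedge : ∃ a ∈ R, ∃ b ∈ R, G.Adj a b := by
    by_contra hno
    push Not at hno
    obtain ⟨y, hy, hineq⟩ := hcomp a0 b0 hab0 (hnotL _ ha0) (hnotL _ hb0)
    have hnn : ∀ u ∈ Lᶜ, ∀ w ∈ Lᶜ, 0 ≤ (aa (joinG L H a0 b0 hab0) u w - aa G u w) * x w := by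
      intro u hu w hw
      rw [← hRL] at hu hw
      rw [aa_of_not (hno u hu w hw), sub_zero]
      exact mul_nonneg (aa_nonneg _ _ _) (hx0' w)
    have hlow : 1 / 2 * (1 - η) ≤
        ∑ u ∈ Lᶜ, y u * ∑ w ∈ Lᶜ, (aa (joinG L H a0 b0 hab0) u w - aa G u w) * x w := by
      have ha0' : a0 ∈ Lᶜ := hRL ▸ ha0
      have hb0' : b0 ∈ Lᶜ := hRL ▸ hb0
      have h1 : (aa (joinG L H a0 b0 hab0) a0 b0 - aa G a0 b0) * x b0 ≤
          ∑ w ∈ Lᶜ, (aa (joinG L H a0 b0 hab0) a0 w - aa G a0 w) * x w :=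
        single_le_sum (f := fun w => (aa (joinG L H a0 b0 hab0) a0 w - aa G a0 w) * x w)
          (hnn a0 ha0') hb0'
      have h2 : y a0 * ∑ w ∈ Lᶜ, (aa (joinG L H a0 b0 hab0) a0 w - aa G a0 w) * x w ≤
          ∑ u ∈ Lᶜ, y u * ∑ w ∈ Lᶜ, (aa (joinG L H a0 b0 hab0) u w - aa G u w) * x w :=
        single_le_sum (f := fun u => y u * ∑ w ∈ Lᶜ,
          (aa (joinG L H a0 b0 hab0) u w - aa G u w) * x w)
          (fun u hu => mul_nonneg (by linarith only [(hy u (mem_compl.1 hu)).1])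
            (sum_nonneg (hnn u hu))) ha0'
      rw [aa_of_not (hno a0 ha0 b0 hb0), sub_zero, aa_of_adj (show (joinG L H a0 b0 hab0).Adj a0 b0 from
        Or.inr (Or.inr (Or.inr (Or.inl ⟨rfl, rfl⟩)))), one_mul] at h1
      have h3 := (hy a0 (mem_compl.1 ha0')).1
      have h4 := hx0 b0
      refine le_trans ?_ h2
      have h5 : 1 - η ≤ ∑ w ∈ Lᶜ, (aa (joinG L H a0 b0 hab0) a0 w - aa G a0 w) * x w :=
        h4.trans h1
      exact mul_le_mul h3 h5 (by linarith only [hη900]) (by linarith only [h3])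
    have hDD : D' ≤ D := by omega
    have hDDR : (D' : ℝ) ≤ D := by exact_mod_cast hDD
    have h6 := mul_le_mul_of_nonneg_left hDDR (show 0 ≤ 1 - η by linarith only [hη900])
    have h7 := mul_le_mul_of_nonneg_left hD'1 hη0.le
    linarith only [h6, h7, hlow, hineq, hη900]
  obtain ⟨a, ha, b, hb, hab⟩ := hedge
  refine ⟨?_, edgeCount_one G R ha hb hab fun c d hc hd hcd => hone a b c d ha hb hc hd hab hcd⟩
  rw [← hD, ← hD']
  by_contra hne
  obtain ⟨y, hy, hineq⟩ := hcomp a b hab.ne (hnotL _ ha) (hnotL _ hb)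
  have hzero : ∑ u ∈ Lᶜ, y u * ∑ w ∈ Lᶜ, (aa (joinG L H a b hab.ne) u w - aa G u w) * x w = 0 := by
    refine sum_eq_zero fun u hu => ?_
    rw [sum_eq_zero, mul_zero]
    intro w hw
    have hiff := join_RR L H a b hab.ne (fun u v h => (hH u v h).1) (mem_compl.1 hu) (mem_compl.1 hw)
    rw [← hRL] at hu hw
    by_cases h : G.Adj u w
    · rw [aa_of_adj h, aa_of_adj, sub_self, zero_mul]
      rw [hiff]
      rcases hone a b u w ha hb hu hw hab h with ⟨p, q⟩ | ⟨p, q⟩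
      · exact Or.inl ⟨p.symm, q.symm⟩
      · exact Or.inr ⟨q.symm, p.symm⟩
    · rw [aa_of_not h, aa_of_not, sub_self, zero_mul]
      rw [hiff]
      rintro (⟨p, q⟩ | ⟨p, q⟩)
      · rw [p, q] at h; exact h hab
      · rw [p, q] at h; exact h hab.symm
  rw [hzero] at hineq
  have hDD : D' + 2 ≤ D := by omega
  have hDDR : (D' : ℝ) + 2 ≤ D := by exact_mod_cast hDD
  have h6 := mul_le_mul_of_nonneg_left hDDR (show 0 ≤ 1 - η by linarith only [hη900])
  have h7 := mul_le_mul_of_nonneg_left hD'1 hη0.le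
  linarith only [h6, h7, hineq, hη900]

theorem regular_final (k : ℕ) (hk : 3 ≤ k) :
    ∃ N : ℕ, ∀ n : ℕ, N ≤ n → ∀ G : SimpleGraph (Fin n), IsSpexWheel (2 * k + 1) G →
      ∀ L R : Finset (Fin n), IsMaxCut G L R →
        (∃ v ∈ L, degIn G L v = k - 1) →
        (Even ((k - 1) * L.card) → ∀ v ∈ L, degIn G L v = k - 1) ∧
        (Odd ((k - 1) * L.card) →
          ∃ w ∈ L, degIn G L w = k - 2 ∧ ∀ v ∈ L, v ≠ w → degIn G L v = k - 1) ∧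
        edgeCount (G.induce (R : Set (Fin n))) = 1 := by
  obtain ⟨N, hN⟩ := regular_aux k hk
  refine ⟨N, fun n hn G hG L R hcut hv => ?_⟩
  obtain ⟨h1, h2, h3⟩ := hN n hn G hG L R hcut hv
  refine ⟨?_, ?_, h3⟩
  · intro he v hv
    rw [Nat.even_iff.1 he, sum_eq_zero_iff] at h2
    have := h2 v hv
    have := h1 v hv
    omega
  · intro ho
    rw [Nat.odd_iff.1 ho] at h2
    have hex : ∃ w ∈ L, k - 1 - degIn G L w ≠ 0 := by
      by_contra hcon
      push Not at hcon
      rw [sum_eq_zero hcon] at h2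
      omega
    obtain ⟨w, hw, hne⟩ := hex
    have hsplit := sum_erase_add L (fun v => k - 1 - degIn G L v) hw
    have hw1 := h1 w hw
    refine ⟨w, hw, by omega, fun v hv hvw => ?_⟩
    have hz : ∑ v ∈ L.erase w, (k - 1 - degIn G L v) = 0 := by omega
    rw [sum_eq_zero_iff] at hz
    have := hz v (mem_erase.2 ⟨hvw, hv⟩)
    have := h1 v hv
    omega

end Helpers

/-- If `L` has a vertex of internal degree `k - 1`, then `G[L]` is
`(k-1)`-regular when `(k-1)|L|` is even and nearly `(k-1)`-regular when `(k-1)|L|` is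
odd, and `G[R]` has exactly one edge. -/
theorem regular_inside_L (k : ℕ) (hk : 3 ≤ k) (hk4 : k ≠ 4) (hk5 : k ≠ 5) :
    ∃ N : ℕ, ∀ n : ℕ, N ≤ n → ∀ G : SimpleGraph (Fin n), IsSpexWheel (2 * k + 1) G →
      ∀ L R : Finset (Fin n), IsMaxCut G L R →
        (∃ v ∈ L, degIn G L v = k - 1) →
        (Even ((k - 1) * L.card) → ∀ v ∈ L, degIn G L v = k - 1) ∧
        (Odd ((k - 1) * L.card) →
          ∃ w ∈ L, degIn G L w = k - 2 ∧ ∀ v ∈ L, v ≠ w → degIn G L v = k - 1) ∧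
        edgeCount (G.induce (R : Set (Fin n))) = 1 := by
  exact regular_final k hk
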